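/- arXiv:2602.22089 — 4 statements merged into one kernel-verified Lean document; each statement's English description precedes it below -/
import Mathlib

section
/- A hereditary class of graphs has bounded linear clique-width if and only if (i) its prime members have bounded linear clique-width, (ii) it does not contain all quasi-threshold graphs, and (iii) it does not contain all co-quasi-threshold graphs. -/
/-!
The proof replaces linear clique-width by neighbourhood-width: the least `k` for which the vertices
can be linearly ordered so that at every cut the vertices on the left have at most `k` distinct
neighbourhoods on the right.  Vertices sharing a label have the same later neighbours, and conversely
`k + 1` labels suffice to follow such an order, so the two parameters differ by at most one
(`nwLE_of_lcwLE`, `lcwLE_of_nwLE`).  Neighbourhood-width is invariant under complementation.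

Forward direction.  Taking three disjoint copies of a graph and adding a dominating vertex raises the
number of nonempty neighbourhoods forced at some cut by one (`forcesWidth_core`), so quasi-threshold
graphs, and hence their complements, have unbounded neighbourhood-width.

Backward direction.  Every quasi-threshold graph embeds in a universal one, `Q_a`, where `Q_{a+1}` is
the disjoint union of `K_1 * Q_a` and `Q_a` (`HasQ`, `IsQT.exists_embedding`).  It remains to bound
the neighbourhood-width of graphs excluding `Q_{a+1}` and the complement of `Q_{b+1}`, by induction on
`a + b`.  Call a graph light if it excludes `Q_a` or the complement of `Q_b`; light graphs are bounded
by induction, say by `L`.  Decompose a graph into modules.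

* If the graph and its complement are connected, the maximal proper modules partition it with a prime
  quotient (`exists_blocks`).  Two blocks are distinguished by a third vertex, so two blocks that are
  not light would produce `Q_{a+1}` or the complement of `Q_{b+1}` (`Blocks.heavy_unique`).  Hence at
  most one block is heavy; placing it first in an order of the quotient, the heavy block costs nothing
  extra, and the other blocks cost at most `p + 1 + L` (`Blocks.nwLE`), where `p` bounds the prime
  graphs.
* If the graph is a disjoint union with at most one heavy side, place that side first.  If both sides
  are heavy, neither contains `K_1 * Q_a`; in that case all blocks below are light, and disjoint unions
  do not create new nonempty neighbourhoods, which gives a bound outright (`nwNELE_of_not_hasJQ`).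
* A join is handled by passing to the complement.

In every case the width is at most `p + 2 + L` (`nwLE_step`).
-/

open scoped Classical

/-! ### Linear clique-width -/

/-- A configuration reached while building a graph by a linear clique-width expression:
the set of vertices introduced so far, the adjacency relation created so far, and the
current labeling of the vertices by labels from `Fin k`. -/
structure LCWConfig (V : Type) (k : ℕ) where
  verts : Set V
  adj : V → V → Prop
  lab : V → Fin k

/-- A single operation of a linear clique-width expression with `k` labels:
introduce a new vertex with some label, join all vertices labeled `i` to all vertices
labeled `j` (for `i ≠ j`), or relabel every vertex labeled `i` to `j` (for `i ≠ j`). -/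
inductive LCWStep {V : Type} {k : ℕ} : LCWConfig V k → LCWConfig V k → Prop
  | intro (C : LCWConfig V k) (v : V) (hv : v ∉ C.verts) (c : Fin k) :
      LCWStep C ⟨insert v C.verts, C.adj, fun x => if x = v then c else C.lab x⟩
  | join (C : LCWConfig V k) (i j : Fin k) (hij : i ≠ j) :
      LCWStep C ⟨C.verts, fun x y => C.adj x y ∨
        (x ∈ C.verts ∧ y ∈ C.verts ∧
          ((C.lab x = i ∧ C.lab y = j) ∨ (C.lab x = j ∧ C.lab y = i))), C.lab⟩
  | relabel (C : LCWConfig V k) (i j : Fin k) (hij : i ≠ j) :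
      LCWStep C ⟨C.verts, C.adj, fun x => if C.lab x = i then j else C.lab x⟩

/-- `lcwLE G k` means that the graph `G` can be constructed by a linear clique-width
expression using (at most) `k` labels. -/
def lcwLE {V : Type} (G : SimpleGraph V) (k : ℕ) : Prop :=
  ∃ ℓ₀ ℓ : V → Fin k,
    Relation.ReflTransGen LCWStep
      (⟨∅, fun _ _ => False, ℓ₀⟩ : LCWConfig V k) ⟨Set.univ, G.Adj, ℓ⟩

/-- The linear clique-width of a graph `G`: the least number of labels needed to
construct `G` by a linear clique-width expression. -/
noncomputable def lcw {V : Type} (G : SimpleGraph V) : ℕ :=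
  sInf {k | lcwLE G k}

/-! ### Modules, prime graphs, inflations -/

/-- A module of a graph: every vertex outside `M` is adjacent to all of `M` or to none of it. -/
def IsModule {V : Type} (G : SimpleGraph V) (M : Set V) : Prop :=
  ∀ u ∈ M, ∀ v ∈ M, ∀ w ∉ M, (G.Adj w u ↔ G.Adj w v)

/-- A graph on at least two vertices is prime if all of its modules are trivial
(empty, singletons, or the whole vertex set). -/
def IsPrime {V : Type} (G : SimpleGraph V) : Prop :=
  2 ≤ Nat.card V ∧ ∀ M : Set V, IsModule G M → M.Subsingleton ∨ M = Set.univ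

/-- `IsInflation G H φ` says that `G` is an inflation of `H`, where `φ` maps each vertex of
`G` to the vertex of `H` whose module (namely the induced subgraph of `G` on the fiber
`φ ⁻¹ {v}`) contains it: fibers are nonempty, and for vertices in distinct fibers,
adjacency in `G` is equivalent to adjacency of the fibers' images in `H`. -/
def IsInflation {V ι : Type} (G : SimpleGraph V) (H : SimpleGraph ι) (φ : V → ι) : Prop :=
  Function.Surjective φ ∧
    ∀ x y : V, φ x ≠ φ y → (G.Adj x y ↔ H.Adj (φ x) (φ y))

/-! ### Join, quasi-threshold graphs, universal quasi-threshold graphs -/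

/-- The join of two graphs: their disjoint union together with all edges between the parts. -/
def GJoin {α β : Type} (G : SimpleGraph α) (H : SimpleGraph β) : SimpleGraph (α ⊕ β) :=
  (Gᶜ ⊕g Hᶜ)ᶜ

/-- Quasi-threshold graphs: those constructible (up to isomorphism) from `K₁` by repeatedly
taking joins with `K₁` and disjoint unions with other quasi-threshold graphs. -/
inductive IsQT : ∀ {V : Type}, SimpleGraph V → Prop
  | single : IsQT (⊥ : SimpleGraph (Fin 1))
  | joinK1 {V : Type} {G : SimpleGraph V} :
      IsQT G → IsQT (GJoin (⊥ : SimpleGraph (Fin 1)) G)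
  | union {V W : Type} {G : SimpleGraph V} {H : SimpleGraph W} :
      IsQT G → IsQT H → IsQT (G ⊕g H)
  | iso {V W : Type} {G : SimpleGraph V} {H : SimpleGraph W} :
      IsQT G → Nonempty (G ≃g H) → IsQT H

/-- Vertex set of the universal quasi-threshold graph `Q_{n+1}`. -/
def QVert : ℕ → Type
  | 0 => Fin 1
  | n + 1 => ((Fin 1) ⊕ QVert n) ⊕ QVert n

/-- The universal quasi-threshold graphs, indexed so that `QGraph (t - 1)` is `Q_t`:
`Q_1 = K_1` and `Q_{t} = (K_1 ∗ Q_{t-1}) ⊎ Q_{t-1}` for `t ≥ 2`. -/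
def QGraph : (n : ℕ) → SimpleGraph (QVert n)
  | 0 => ⊥
  | n + 1 => (GJoin (⊥ : SimpleGraph (Fin 1)) (QGraph n)) ⊕g (QGraph n)

/-! ### Hereditary classes of graphs -/

/-- A hereditary class of finite graphs, represented by the set of its members on the
vertex sets `Fin n`: it is closed under isomorphism and induced subgraphs, which together
amount to closure under induced-subgraph embeddings. -/
def Hereditary (C : ∀ n : ℕ, Set (SimpleGraph (Fin n))) : Prop :=
  ∀ {m n : ℕ} (H : SimpleGraph (Fin m)) (G : SimpleGraph (Fin n)),
    Nonempty (H ↪g G) → G ∈ C n → H ∈ C m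

/-! ### Neighbourhood-width of vertex sets -/

section Width

variable {V : Type}

/-- `Reach S good P`: the set `P ⊆ S` can be built from `∅` by adding one vertex of `S` at a time
in such a way that every intermediate set satisfies `good`.  This encodes an initial segment of a
linear order on `S`, presented by its cuts. -/
inductive Reach (S : Set V) (good : Set V → Prop) : Set V → Prop
  | empty : good ∅ → Reach S good ∅
  | insert (P : Set V) (v : V) : Reach S good P → v ∈ S → v ∉ P →
      good (insert v P) → Reach S good (insert v P)

/-- The vertices of `P` realise at most `k` neighbourhoods in `S \ P`: there is a colouring of `P`
with colours `< k` in which vertices of equal colour agree on `S \ P`. -/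
def Good (G : SimpleGraph V) (S : Set V) (k : ℕ) (P : Set V) : Prop :=
  ∃ c : V → ℕ, (∀ x ∈ P, c x < k) ∧
    ∀ x ∈ P, ∀ y ∈ P, c x = c y → ∀ z ∈ S, z ∉ P → (G.Adj x z ↔ G.Adj y z)

/-- The vertices of `P` realise at most `k` *nonempty* neighbourhoods in `S \ P`; colour `0` is
reserved for vertices without a neighbour in `S \ P`. -/
def GoodNE (G : SimpleGraph V) (S : Set V) (k : ℕ) (P : Set V) : Prop :=
  ∃ c : V → ℕ, (∀ x ∈ P, c x ≤ k) ∧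
    (∀ x ∈ P, ∀ y ∈ P, c x = c y → ∀ z ∈ S, z ∉ P → (G.Adj x z ↔ G.Adj y z)) ∧
    ∀ x ∈ P, c x = 0 → ∀ z ∈ S, z ∉ P → ¬ G.Adj x z

/-- The neighbourhood-width of the subgraph induced on `S` is at most `k`: there is a linear order
of `S` each of whose cuts has at most `k` neighbourhoods. -/
def NwLE (G : SimpleGraph V) (S : Set V) (k : ℕ) : Prop := Reach S (Good G S k) S

/-- Variant of `NwLE` which counts only nonempty neighbourhoods. -/
def NwNELE (G : SimpleGraph V) (S : Set V) (k : ℕ) : Prop := Reach S (GoodNE G S k) S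

variable {G : SimpleGraph V} {S : Set V}

theorem Reach.subset {good : Set V → Prop} {P : Set V} (h : Reach S good P) : P ⊆ S := by
  induction h with
  | empty _ => exact Set.empty_subset _
  | insert P v _ hv _ _ ih => exact Set.insert_subset hv ih

theorem Reach.good {good : Set V → Prop} {P : Set V} (h : Reach S good P) : good P := by
  cases h <;> assumption

theorem Reach.mono {good good' : Set V → Prop} (hg : ∀ Q, good Q → good' Q) {P : Set V}
    (h : Reach S good P) : Reach S good' P := by
  induction h with
  | empty h0 => exact .empty (hg _ h0)
  | insert P v _ hv hvP hgood ih => exact .insert P v ih hv hvP (hg _ hgood)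

/-- Appending an order of `M` to an order of `P₀`. -/
theorem Reach.append {M P₀ : Set V} {good₁ good₂ : Set V → Prop} (h₀ : Reach S good₂ P₀)
    (hMS : M ⊆ S) (hdisj : ∀ x ∈ M, x ∉ P₀)
    (hg : ∀ Q ⊆ M, good₁ Q → good₂ (P₀ ∪ Q)) {Q : Set V} (h : Reach M good₁ Q) :
    Reach S good₂ (P₀ ∪ Q) := by
  induction h with
  | empty _ => simpa using h₀
  | insert P v hP hv hvP hgood ih =>
    have := hg _ (Set.insert_subset hv hP.subset) hgood
    rw [Set.union_insert] at this ⊢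
    exact .insert _ v ih (hMS hv) (fun h => h.elim (hdisj v hv) hvP) this

theorem Good.mono {k k' : ℕ} (hk : k ≤ k') {P : Set V} (h : Good G S k P) : Good G S k' P := by
  obtain ⟨c, h1, h2⟩ := h
  exact ⟨c, fun x hx => (h1 x hx).trans_le hk, h2⟩

theorem NwLE.mono {k k' : ℕ} (hk : k ≤ k') (h : NwLE G S k) : NwLE G S k' :=
  Reach.mono (fun _ => Good.mono hk) h

theorem GoodNE.mono {k k' : ℕ} (hk : k ≤ k') {P : Set V} (h : GoodNE G S k P) :
    GoodNE G S k' P := by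
  obtain ⟨c, h1, h2⟩ := h
  exact ⟨c, fun x hx => (h1 x hx).trans hk, h2⟩

theorem NwNELE.mono {k k' : ℕ} (hk : k ≤ k') (h : NwNELE G S k) : NwNELE G S k' :=
  Reach.mono (fun _ => GoodNE.mono hk) h

theorem NwLE.toNE {k : ℕ} (h : NwLE G S k) : NwNELE G S k := by
  refine Reach.mono (fun Q hQ => ?_) h
  obtain ⟨c, h1, h2⟩ := hQ
  exact ⟨fun x => c x + 1, fun x hx => h1 x hx,
    fun x hx y hy hxy => h2 x hx y hy (by simpa using hxy), fun x _ h0 => by simp at h0⟩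

theorem NwNELE.toNw {k : ℕ} (h : NwNELE G S k) : NwLE G S (k + 1) := by
  refine Reach.mono (fun Q hQ => ?_) h
  obtain ⟨c, h1, h2, -⟩ := hQ
  exact ⟨c, fun x hx => Nat.lt_succ_of_le (h1 x hx), h2⟩

theorem Good.compl {k : ℕ} {P : Set V} (h : Good G S k P) : Good Gᶜ S k P := by
  obtain ⟨c, h1, h2⟩ := h
  refine ⟨c, h1, fun x hx y hy hxy z hz hzP => ?_⟩
  have hxz : x ≠ z := fun h => hzP (h ▸ hx)
  have hyz : y ≠ z := fun h => hzP (h ▸ hy)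
  simp [SimpleGraph.compl_adj, hxz, hyz, h2 x hx y hy hxy z hz hzP]

theorem NwLE.compl {k : ℕ} (h : NwLE G S k) : NwLE Gᶜ S k :=
  Reach.mono (fun _ => Good.compl) h

theorem NwLE.of_compl {k : ℕ} (h : NwLE Gᶜ S k) : NwLE G S k := by
  simpa using h.compl

theorem good_empty (k : ℕ) : Good G S k ∅ := ⟨fun _ => 0, by simp, by simp⟩

theorem goodNE_empty (k : ℕ) : GoodNE G S k ∅ := ⟨fun _ => 0, by simp, by simp, by simp⟩

theorem nwLE_of_subsingleton (hS : S.Subsingleton) {k : ℕ} (hk : 1 ≤ k) : NwLE G S k := by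
  rcases hS.eq_empty_or_singleton with rfl | ⟨v, rfl⟩
  · exact .empty (good_empty k)
  · have := Reach.insert (S := {v}) (good := Good G {v} k) ∅ v (.empty (good_empty k)) rfl (by simp)
      ⟨fun _ => 0, fun _ _ => hk, fun x _ y _ _ z hz hz' => by simp_all⟩
    simpa [NwLE] using this

theorem nwLE_card [Finite V] : NwLE G Set.univ (Nat.card V) := by
  have key : ∀ P : Set V, Reach Set.univ (Good G Set.univ (Nat.card V)) P := by
    intro P
    have hgood : ∀ P : Set V, Good G Set.univ (Nat.card V) P := fun P =>
      ⟨fun x => (Finite.equivFin V x : ℕ), fun x _ => (Finite.equivFin V x).2,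
        fun x _ y _ hxy => by
          have : x = y := (Finite.equivFin V).injective (Fin.ext hxy)
          simp [this]⟩
    induction P, P.toFinite using Set.Finite.induction_on with
    | empty => exact .empty (hgood _)
    | insert hv _ ih => exact .insert _ _ ih trivial hv (hgood _)
  exact key _

/-! ### Modules relative to a vertex set -/

/-- `M` is a module of the subgraph induced on `S` (inclusion `M ⊆ S` is kept separate). -/
def ModOn (G : SimpleGraph V) (S M : Set V) : Prop :=
  ∀ u ∈ M, ∀ v ∈ M, ∀ w ∈ S, w ∉ M → (G.Adj w u ↔ G.Adj w v)

/-- The subgraph induced on `S` is prime. -/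
def PrimeOn (G : SimpleGraph V) (S : Set V) : Prop :=
  S.Nontrivial ∧ ∀ M ⊆ S, ModOn G S M → M.Subsingleton ∨ M = S

theorem ModOn.compl {M : Set V} (h : ModOn G S M) : ModOn Gᶜ S M := by
  intro u hu v hv w hw hwM
  have h1 : w ≠ u := fun h => hwM (h ▸ hu)
  have h2 : w ≠ v := fun h => hwM (h ▸ hv)
  simp [SimpleGraph.compl_adj, h1, h2, h u hu v hv w hw hwM]

theorem ModOn.of_compl {M : Set V} (h : ModOn Gᶜ S M) : ModOn G S M := by simpa using h.compl

theorem PrimeOn.of_compl (h : PrimeOn Gᶜ S) : PrimeOn G S :=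
  ⟨h.1, fun M hM hmod => h.2 M hM hmod.compl⟩

/-- A module `M` of neighbourhood-width `m` may be appended to an initial segment `P₀` with at most
`j` neighbourhoods at the cost of `m` further neighbourhoods. -/
theorem Reach.append_module {M P₀ : Set V} {j m k : ℕ} (h₀ : Reach S (Good G S k) P₀)
    (hj : Good G S j P₀) (hMS : M ⊆ S) (hdisj : ∀ x ∈ M, x ∉ P₀) (hmod : ModOn G S M)
    (hM : NwLE G M m) (hk : j + m ≤ k) : Reach S (Good G S k) (P₀ ∪ M) := by
  refine Reach.append (good₁ := Good G M m) h₀ hMS hdisj (fun Q hQ hgood => ?_) hM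
  obtain ⟨c, hc, hc'⟩ := hj
  obtain ⟨d, hd, hd'⟩ := hgood
  refine ⟨fun x => if x ∈ P₀ then c x else j + d x, ?_, ?_⟩
  · rintro x (hx | hx)
    · have := hc x hx
      simp only [hx, if_true]; omega
    · have := hd x hx
      simp only [hdisj x (hQ hx), if_false]; omega
  · intro x hx y hy hxy z hz hzP
    simp only [Set.mem_union, not_or] at hzP
    rcases hx with hx | hx <;> rcases hy with hy | hy
    · simp only [hx, hy, if_true] at hxy
      exact hc' x hx y hy hxy z hz hzP.1
    · have := hc x hx
      simp only [hx, hdisj y (hQ hy), if_true, if_false] at hxy; omega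
    · have := hc y hy
      simp only [hy, hdisj x (hQ hx), if_true, if_false] at hxy; omega
    · simp only [hdisj x (hQ hx), hdisj y (hQ hy), if_false, Nat.add_left_cancel_iff] at hxy
      by_cases hzM : z ∈ M
      · exact hd' x hx y hy hxy z hzM hzP.2
      · rw [G.adj_comm x z, G.adj_comm y z]
        exact hmod x (hQ hx) y (hQ hy) z hz hzM

theorem Reach.start_module {M : Set V} {m k : ℕ} (hMS : M ⊆ S) (hmod : ModOn G S M)
    (hM : NwLE G M m) (hk : m ≤ k) : Reach S (Good G S k) M := by
  have := Reach.append_module (P₀ := ∅) (j := 0) (.empty (good_empty k)) (good_empty 0)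
    hMS (by simp) hmod hM (by omega)
  simpa using this

/-- `S` is the disjoint union of nonempty sets `A` and `B` with no edges between them. -/
def Split (G : SimpleGraph V) (S A B : Set V) : Prop :=
  A ∪ B = S ∧ A.Nonempty ∧ B.Nonempty ∧ ∀ x ∈ A, ∀ y ∈ B, x ≠ y ∧ ¬ G.Adj x y

theorem Split.symm {A B : Set V} (h : Split G S A B) : Split G S B A :=
  ⟨by rw [Set.union_comm, h.1], h.2.2.1, h.2.1,
    fun x hx y hy => ⟨(h.2.2.2 y hy x hx).1.symm, fun h' => (h.2.2.2 y hy x hx).2 h'.symm⟩⟩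

theorem Split.subset {A B : Set V} (h : Split G S A B) : A ⊆ S := h.1 ▸ Set.subset_union_left

theorem Split.ssubset {A B : Set V} (h : Split G S A B) : A ⊂ S := by
  refine ⟨h.subset, fun h' => ?_⟩
  obtain ⟨y, hy⟩ := h.2.2.1
  exact (h.2.2.2 y (h' (h.symm.subset hy)) y hy).1 rfl

theorem Split.modOn {A B : Set V} (h : Split G S A B) : ModOn G S A := by
  intro u hu v hv w hw hwA
  have hwB : w ∈ B := by rw [← h.1] at hw; exact hw.resolve_left hwA
  have h1 := (h.symm.2.2.2 w hwB u hu).2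
  have h2 := (h.symm.2.2.2 w hwB v hv).2
  simp [h1, h2]

theorem Split.nwLE {A B : Set V} (h : Split G S A B) {k m : ℕ} (hA : NwLE G A k)
    (hB : NwLE G B m) (hk : 1 + m ≤ k) : NwLE G S k := by
  have h1 : Reach S (Good G S k) A := Reach.start_module h.subset h.modOn hA le_rfl
  have h2 : Good G S 1 A := by
    refine ⟨fun _ => 0, fun _ _ => Nat.one_pos, fun x hx y hy _ z hz hzA => ?_⟩
    rw [G.adj_comm x, G.adj_comm y]
    exact h.modOn x hx y hy z hz hzA
  have := h1.append_module h2 h.symm.subset (fun x hx hx' => (h.2.2.2 x hx' x hx).1 rfl)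
    h.symm.modOn hB hk
  rwa [h.1] at this

/-- Disjoint unions do not increase the number of nonempty neighbourhoods. -/
theorem Split.nwNELE {A B : Set V} (h : Split G S A B) {k : ℕ} (hA : NwNELE G A k)
    (hB : NwNELE G B k) : NwNELE G S k := by
  have hAB : ∀ x ∈ A, ∀ z ∈ S, z ∉ A → ¬ G.Adj x z := by
    intro x hx z hz hzA
    rw [← h.1] at hz
    exact (h.2.2.2 x hx z (hz.resolve_left hzA)).2
  have hBA : ∀ x ∈ B, ∀ z ∈ S, z ∉ B → ¬ G.Adj x z := by
    intro x hx z hz hzB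
    rw [← h.1] at hz
    exact fun h' => (h.2.2.2 z (hz.resolve_right hzB) x hx).2 h'.symm
  have h1 : Reach S (GoodNE G S k) A := by
    have := Reach.append (P₀ := ∅) (good₂ := GoodNE G S k) (.empty (goodNE_empty k)) h.subset
      (by simp) (fun Q hQ hgood => ?_) hA
    · simpa using this
    · rw [Set.empty_union]
      obtain ⟨c, hc1, hc2, hc3⟩ := hgood
      refine ⟨c, hc1, fun x hx y hy hxy z hz hzQ => ?_, fun x hx h0 z hz hzQ => ?_⟩
      · by_cases hzA : z ∈ A
        · exact hc2 x hx y hy hxy z hzA hzQ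
        · simp [hAB x (hQ hx) z hz hzA, hAB y (hQ hy) z hz hzA]
      · by_cases hzA : z ∈ A
        · exact hc3 x hx h0 z hzA hzQ
        · exact hAB x (hQ hx) z hz hzA
  have h2 := Reach.append (good₂ := GoodNE G S k) h1 h.symm.subset
    (fun x hx hx' => (h.2.2.2 x hx' x hx).1 rfl) (fun Q hQ hgood => ?_) hB
  · rwa [h.1] at h2
  obtain ⟨c, hc1, hc2, hc3⟩ := hgood
  have hBnA : ∀ x ∈ B, x ∉ A := fun x hx hx' => (h.2.2.2 x hx' x hx).1 rfl
  have hzero : ∀ x ∈ A ∪ Q, (if x ∈ A then 0 else c x) = 0 → ∀ z ∈ S, z ∉ A ∪ Q →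
      ¬ G.Adj x z := by
    intro x hx h0 z hz hzQ
    simp only [Set.mem_union, not_or] at hzQ
    have hzB : z ∈ B := by rw [← h.1] at hz; exact hz.resolve_left hzQ.1
    by_cases hxA : x ∈ A
    · exact hAB x hxA z hz hzQ.1
    · simp only [hxA, if_false] at h0
      exact hc3 x (hx.resolve_left hxA) h0 z hzB hzQ.2
  refine ⟨fun x => if x ∈ A then 0 else c x, ?_, ?_, hzero⟩
  · intro x hx
    by_cases hxA : x ∈ A
    · simp [hxA]
    · simpa [hxA] using hc1 x (hx.resolve_left hxA)
  · intro x hx y hy hxy z hz hzQ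
    by_cases h0 : (if x ∈ A then 0 else c x) = 0
    · have h1 := hzero x hx h0 z hz hzQ
      have h2 := hzero y hy (hxy.symm.trans h0) z hz hzQ
      simp [h1, h2]
    · have hxA : x ∉ A := fun h => h0 (by simp [h])
      have hyA : y ∉ A := fun h => h0 (by rw [show (if x ∈ A then 0 else c x) = _ from hxy]; simp [h])
      simp only [hxA, hyA, if_false] at hxy
      simp only [Set.mem_union, not_or] at hzQ
      have hzB : z ∈ B := by rw [← h.1] at hz; exact hz.resolve_left hzQ.1
      exact hc2 x (hx.resolve_left hxA) y (hy.resolve_left hyA) hxy z hzB hzQ.2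

/-! ### The blocks of an indecomposable set -/

/-- The maximal proper modules: `M x` is the block of `x`, the blocks partition `S`, and a module
containing a block is the block itself or all of `S`. -/
structure Blocks (G : SimpleGraph V) (S : Set V) (M : V → Set V) : Prop where
  mem : ∀ x ∈ S, x ∈ M x
  sub : ∀ x ∈ S, M x ⊆ S
  ne : ∀ x ∈ S, M x ≠ S
  mod : ∀ x ∈ S, ModOn G S (M x)
  eq : ∀ x ∈ S, ∀ y ∈ M x, M y = M x
  max : ∀ x ∈ S, ∀ N ⊆ S, ModOn G S N → M x ⊆ N → N = M x ∨ N = S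

/-- Gallai's theorem: if the subgraph induced on `S` is connected and co-connected, then its maximal
proper modules partition `S`. -/
theorem exists_blocks [Finite V] (hS : S.Nontrivial) (h0 : ∀ A B, ¬ Split G S A B)
    (h1 : ∀ A B, ¬ Split Gᶜ S A B) : ∃ M : V → Set V, Blocks G S M := by
  -- Two overlapping maximal proper modules would cover `S`, and then `M₁ \ M₂` would be
  -- homogeneous to `M₂`, splitting the graph or its complement.
  have huniq : ∀ M₁ M₂ : Set V, M₁ ⊆ S → M₂ ⊆ S → M₁ ≠ S → M₂ ≠ S → ModOn G S M₁ → ModOn G S M₂ →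
      (∀ N ⊆ S, ModOn G S N → M₁ ⊆ N → N = M₁ ∨ N = S) →
      (∀ N ⊆ S, ModOn G S N → M₂ ⊆ N → N = M₂ ∨ N = S) → (M₁ ∩ M₂).Nonempty → M₁ = M₂ := by
    intro M₁ M₂ hs1 hs2 hn1 hn2 hm1 hm2 hx1 hx2 ⟨a, ha1, ha2⟩
    have hU : ModOn G S (M₁ ∪ M₂) := by
      have key : ∀ u ∈ M₁ ∪ M₂, ∀ w ∈ S, w ∉ M₁ ∪ M₂ → (G.Adj w u ↔ G.Adj w a) := by
        rintro u (hu | hu) w hw hwn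
        · exact hm1 u hu a ha1 w hw (fun h => hwn (Or.inl h))
        · exact hm2 u hu a ha2 w hw (fun h => hwn (Or.inr h))
      intro u hu v hv w hw hwn
      rw [key u hu w hw hwn, key v hv w hw hwn]
    have hUS := Set.union_subset hs1 hs2
    by_contra hne
    have hUeq : M₁ ∪ M₂ = S := by
      rcases hx1 _ hUS hU Set.subset_union_left with h | h
      · rcases hx2 _ hUS hU Set.subset_union_right with h' | h'
        · exact absurd (h.symm.trans h') hne
        · exact h'
      · exact h
    obtain ⟨x, hx, hxn⟩ : ∃ x ∈ S, x ∉ M₂ := by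
      by_contra! hcon
      exact hn2 (hs2.antisymm hcon)
    obtain ⟨y, hy, hyn⟩ : ∃ y ∈ S, y ∉ M₁ := by
      by_contra! hcon
      exact hn1 (hs1.antisymm hcon)
    have hy2 : y ∈ M₂ := by rw [← hUeq] at hy; exact hy.resolve_left hyn
    have hconst : ∀ u ∈ S \ M₂, ∀ v ∈ M₂, (G.Adj u v ↔ G.Adj x y) := by
      intro u hu v hv
      have hu1 : u ∈ M₁ := by have := hu.1; rw [← hUeq] at this; exact this.resolve_right hu.2
      have hx1 : x ∈ M₁ := by rw [← hUeq] at hx; exact hx.resolve_right hxn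
      rw [hm2 v hv y hy2 u hu.1 hu.2, G.adj_comm u y, G.adj_comm x y]
      exact hm1 u hu1 x hx1 y hy hyn
    by_cases hadj : G.Adj x y
    · refine h1 (S \ M₂) M₂ ⟨by simpa using hs2, ⟨x, hx, hxn⟩, ⟨y, hy2⟩, fun u hu v hv => ?_⟩
      refine ⟨fun h => hu.2 (h ▸ hv), ?_⟩
      simp [SimpleGraph.compl_adj, (hconst u hu v hv).2 hadj]
    · refine h0 (S \ M₂) M₂ ⟨by simpa using hs2, ⟨x, hx, hxn⟩, ⟨y, hy2⟩, fun u hu v hv => ?_⟩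
      exact ⟨fun h => hu.2 (h ▸ hv), fun h => hadj ((hconst u hu v hv).1 h)⟩
  have hex : ∀ x ∈ S, ∃ M : Set V, x ∈ M ∧ M ⊆ S ∧ M ≠ S ∧ ModOn G S M ∧
      ∀ N ⊆ S, ModOn G S N → M ⊆ N → N = M ∨ N = S := by
    intro x hx
    let F : Set (Set V) := {M | x ∈ M ∧ M ⊆ S ∧ M ≠ S ∧ ModOn G S M}
    have hF : F.Nonempty := by
      refine ⟨{x}, rfl, by simpa using hx, ?_, ?_⟩
      · rintro rfl; simp at hS
      · rintro u rfl v rfl w _ _; rfl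
    obtain ⟨M, hM⟩ := F.toFinite.exists_maximal hF
    obtain ⟨a, b, c, d⟩ := hM.prop
    refine ⟨M, a, b, c, d, fun N hN hmod hMN => ?_⟩
    by_cases hNS : N = S
    · exact Or.inr hNS
    · exact Or.inl ((hM.eq_of_subset (t := N) ⟨hMN a, hN, hNS, hmod⟩ hMN).symm)
  choose! M a b c d e using hex
  refine ⟨M, a, b, c, d, fun x hx y hy => ?_, e⟩
  have hyS := b x hx hy
  exact huniq _ _ (b y hyS) (b x hx) (c y hyS) (c x hx) (d y hyS) (d x hx) (e y hyS) (e x hx)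
    ⟨y, a y hyS, hy⟩

variable {M : V → Set V}

/-- Two distinct blocks are homogeneous to one another. -/
theorem Blocks.adj_iff (hM : Blocks G S M) {x y x' y' : V} (hx : x ∈ S) (hy : y ∈ S)
    (hne : M x ≠ M y) (hx' : x' ∈ M x) (hy' : y' ∈ M y) : G.Adj x y ↔ G.Adj x' y' := by
  have h1 : x ∉ M y := fun h => hne (hM.eq y hy x h)
  have h2 : y' ∉ M x := fun h => hne (by rw [← hM.eq y hy y' hy', hM.eq x hx y' h])
  rw [hM.mod y hy y (hM.mem y hy) y' hy' x hx h1, G.adj_comm x, G.adj_comm x']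
  exact hM.mod x hx x (hM.mem x hx) x' hx' y' (hM.sub y hy hy') h2

/-- Substitution of the blocks into a good order of the prime quotient, one distinguished block `M a`
being placed first: only the other blocks pay for the quotient. -/
theorem Blocks.nwLE (hM : Blocks G S M) {p L k : ℕ} (hp : ∀ T : Set V, PrimeOn G T → NwLE G T p)
    (hk : p + 1 + L ≤ k) {a : V} (ha : a ∈ S) (hMa : NwLE G (M a) k)
    (hL : ∀ x ∈ S, M x ≠ M a → NwLE G (M x) L) : NwLE G S k := by
  -- `r` picks a representative of each block.
  obtain ⟨r, hr1, hr2⟩ : ∃ r : V → V, (∀ x ∈ S, r x ∈ M x) ∧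
      ∀ x ∈ S, ∀ y ∈ S, M x = M y → r x = r y := by
    refine ⟨fun x => if h : (M x).Nonempty then h.choose else x, fun x hx => ?_,
      fun x hx y hy hxy => ?_⟩
    · have : (M x).Nonempty := ⟨x, hM.mem x hx⟩
      simp only [this, dif_pos]
      exact this.choose_spec
    · have h1 : (M x).Nonempty := ⟨x, hM.mem x hx⟩
      have h2 : (M y).Nonempty := ⟨y, hM.mem y hy⟩
      simp only [h1, h2, dif_pos]
      congr 1
  have hrS : ∀ x ∈ S, r x ∈ S := fun x hx => hM.sub x hx (hr1 x hx)
  have hrM : ∀ x ∈ S, M (r x) = M x := fun x hx => hM.eq x hx _ (hr1 x hx)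
  have hrr : ∀ x ∈ S, r (r x) = r x := fun x hx => hr2 _ (hrS x hx) _ hx (hrM x hx)
  have hadj : ∀ x ∈ S, ∀ y ∈ S, r x ≠ r y → (G.Adj x y ↔ G.Adj (r x) (r y)) :=
    fun x hx y hy h => hM.adj_iff hx hy (fun h' => h (hr2 x hx y hy h')) (hr1 x hx) (hr1 y hy)
  have hRS : r '' S ⊆ S := by rintro _ ⟨x, hx, rfl⟩; exact hrS x hx
  have hprime : PrimeOn G (r '' S) := by
    refine ⟨?_, fun N hN hmod => ?_⟩
    · obtain ⟨y, hy, hyn⟩ : ∃ y ∈ S, y ∉ M a := by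
        by_contra! hcon
        exact hM.ne a ha ((hM.sub a ha).antisymm hcon)
      refine ⟨r a, ⟨a, ha, rfl⟩, r y, ⟨y, hy, rfl⟩, fun h => hyn ?_⟩
      have : M y = M a := by rw [← hrM y hy, ← hrM a ha, h]
      exact this ▸ hM.mem y hy
    · by_contra! hcon
      obtain ⟨u, hu, v, hv, huv⟩ := hcon.1
      obtain ⟨u', hu', rfl⟩ := hN hu
      obtain ⟨v', hv', rfl⟩ := hN hv
      have hpre : ModOn G S {x | x ∈ S ∧ r x ∈ N} := by
        rintro x ⟨hx, hxN⟩ y ⟨hy, hyN⟩ w hw hwn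
        have hwn' : r w ∉ N := fun h => hwn ⟨hw, h⟩
        rw [hadj w hw x hx (fun h => hwn' (h ▸ hxN)), hadj w hw y hy (fun h => hwn' (h ▸ hyN))]
        exact hmod _ hxN _ hyN _ ⟨w, hw, rfl⟩ hwn'
      rcases hM.max u' hu' _ (fun x hx => hx.1) hpre (fun x hx => ⟨hM.sub u' hu' hx, by
          rwa [hr2 x (hM.sub u' hu' hx) u' hu' (hM.eq u' hu' x hx)]⟩) with h | h
      · have : v' ∈ M u' := h ▸ (⟨hv', hv⟩ : v' ∈ {x | x ∈ S ∧ r x ∈ N})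
        exact huv (hr2 _ hu' _ hv' (hM.eq u' hu' _ this).symm)
      · refine hcon.2 (hN.antisymm ?_)
        rintro _ ⟨x, hx, rfl⟩
        have : x ∈ {x | x ∈ S ∧ r x ∈ N} := h.symm ▸ hx
        exact this.2
  have main : ∀ Q, Reach (r '' S) (Good G (r '' S) p) Q →
      Reach S (Good G S k) (M a ∪ {x | x ∈ S ∧ r x ∈ Q}) := by
    intro Q hQ
    induction hQ with
    | empty _ => simpa using Reach.start_module (hM.sub a ha) (hM.mod a ha) hMa le_rfl
    | insert Q v hQ hv hvQ hgood ih =>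
      obtain ⟨u, hu, rfl⟩ := hv
      have hset : M a ∪ {x | x ∈ S ∧ r x ∈ insert (r u) Q} =
          (M a ∪ {x | x ∈ S ∧ r x ∈ Q}) ∪ M u := by
        have hMu : M u = {x | x ∈ S ∧ r x = r u} := by
          ext x
          refine ⟨fun hx => ⟨hM.sub u hu hx, hr2 x (hM.sub u hu hx) u hu (hM.eq u hu x hx)⟩, ?_⟩
          rintro ⟨hx, hxu⟩
          have : M x = M u := by rw [← hrM x hx, hxu, hrM u hu]
          exact this ▸ hM.mem x hx
        rw [hMu]
        ext x
        simp only [Set.mem_union, Set.mem_ofPred_eq, Set.mem_insert_iff]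
        tauto
      rw [hset]
      by_cases hua : M u = M a
      · rwa [Set.union_eq_left.2 (hua ▸ Set.subset_union_left)]
      · refine ih.append_module (j := p + 1) (m := L) ?_ (hM.sub u hu) ?_ (hM.mod u hu)
          (hL u hu hua) hk
        · obtain ⟨c, hc1, hc2⟩ := hQ.good
          refine ⟨fun x => if x ∈ M a then p else c (r x), ?_, ?_⟩
          · rintro x hx
            by_cases hxa : x ∈ M a
            · simp [hxa]
            · simpa [hxa] using (hc1 _ (hx.resolve_left hxa).2).trans (Nat.lt_succ_self p)
          · intro x hx y hy hxy z hz hzn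
            simp only [Set.mem_union, Set.mem_ofPred_eq, not_or, not_and] at hzn
            by_cases hxa : x ∈ M a <;> by_cases hya : y ∈ M a
            · rw [G.adj_comm x, G.adj_comm y]
              exact hM.mod a ha x hxa y hya z hz hzn.1
            · have := hc1 _ (hy.resolve_left hya).2
              simp only [hxa, hya, if_true, if_false] at hxy; omega
            · have := hc1 _ (hx.resolve_left hxa).2
              simp only [hxa, hya, if_true, if_false] at hxy; omega
            · simp only [hxa, hya, if_false] at hxy
              obtain ⟨hxS, hxQ⟩ := hx.resolve_left hxa
              obtain ⟨hyS, hyQ⟩ := hy.resolve_left hya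
              have hzQ := hzn.2 hz
              rw [hadj x hxS z hz (fun h => hzQ (h ▸ hxQ)), hadj y hyS z hz (fun h => hzQ (h ▸ hyQ))]
              exact hc2 _ hxQ _ hyQ hxy _ ⟨z, hz, rfl⟩ hzQ
        · rintro x hx (hxa | ⟨hxS, hxQ⟩)
          · exact hua (by rw [← hM.eq u hu x hx, hM.eq a ha x hxa])
          · exact hvQ (by rwa [← hr2 x hxS u hu (hM.eq u hu x hx)])
  have := main _ (hp _ hprime)
  rwa [show M a ∪ {x | x ∈ S ∧ r x ∈ r '' S} = S from ?_] at this
  ext x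
  refine ⟨fun h => h.elim (fun h => hM.sub a ha h) (fun h => h.1), fun h => Or.inr ⟨h, x, h, rfl⟩⟩

/-! ### Universal quasi-threshold patterns -/

/-- `HasQ G n S`: the subgraph of `G` induced on `S` contains the universal quasi-threshold graph
with index `n`.  At each stage there are a vertex `w` and sets `A`, `B`, both containing the previous
pattern, such that `w` is complete to `A` and there are no other edges among `w`, `A`, `B`. -/
def HasQ (G : SimpleGraph V) : ℕ → Set V → Prop
  | 0, S => S.Nonempty
  | n + 1, S => ∃ w ∈ S, ∃ A ⊆ S, ∃ B ⊆ S, (∀ x ∈ A, G.Adj w x) ∧ (∀ x ∈ B, w ≠ x ∧ ¬ G.Adj w x) ∧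
      (∀ x ∈ A, ∀ y ∈ B, x ≠ y ∧ ¬ G.Adj x y) ∧ HasQ G n A ∧ HasQ G n B

/-- The subgraph induced on `S` contains the join of a vertex with the pattern of index `n`. -/
def HasJQ (G : SimpleGraph V) (n : ℕ) (S : Set V) : Prop :=
  ∃ w ∈ S, ∃ A ⊆ S, (∀ x ∈ A, G.Adj w x) ∧ HasQ G n A

theorem HasQ.mono {n : ℕ} {S T : Set V} (hST : S ⊆ T) (h : HasQ G n S) : HasQ G n T := by
  cases n with
  | zero => exact Set.Nonempty.mono hST h
  | succ n =>
    obtain ⟨w, hw, A, hA, B, hB, h⟩ := h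
    exact ⟨w, hST hw, A, hA.trans hST, B, hB.trans hST, h⟩

theorem HasJQ.mono {n : ℕ} {S T : Set V} (hST : S ⊆ T) (h : HasJQ G n S) : HasJQ G n T := by
  obtain ⟨w, hw, A, hA, h⟩ := h
  exact ⟨w, hST hw, A, hA.trans hST, h⟩

theorem HasQ.nonempty {n : ℕ} {S : Set V} (h : HasQ G n S) : S.Nonempty := by
  cases n with
  | zero => exact h
  | succ n => exact ⟨_, h.choose_spec.1⟩

theorem HasQ.pred {n : ℕ} {S : Set V} (h : HasQ G (n + 1) S) : HasQ G n S := by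
  obtain ⟨w, hw, A, hA, B, hB, -, -, -, h, -⟩ := h
  exact h.mono hA

theorem HasQ.of_le {m n : ℕ} (hmn : m ≤ n) {S : Set V} (h : HasQ G n S) : HasQ G m S := by
  induction n, hmn using Nat.le_induction with
  | base => exact h
  | succ n _ ih => exact ih h.pred

/-- The universal quasi-threshold graphs are co-connected, so in a join they lie on one side. -/
theorem HasQ.of_join {n : ℕ} {A B : Set V} (h : HasQ G n S) (hs : Split Gᶜ S A B) :
    HasQ G n A ∨ HasQ G n B := by
  cases n with
  | zero => exact Or.inl hs.2.1
  | succ n =>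
    have key : ∀ A B : Set V, Split Gᶜ S A B → ∀ w ∈ A, ∀ A' ⊆ S, ∀ B' ⊆ S, (∀ x ∈ A', G.Adj w x) →
        (∀ x ∈ B', w ≠ x ∧ ¬ G.Adj w x) → (∀ x ∈ A', ∀ y ∈ B', x ≠ y ∧ ¬ G.Adj x y) →
        HasQ G n A' → HasQ G n B' → HasQ G (n + 1) A := by
      intro A B hs w hw A' hA B' hB h1 h2 h3 h4 h5
      have hadj : ∀ x ∈ A, ∀ y ∈ B, G.Adj x y := by
        intro x hx y hy
        have := hs.2.2.2 x hx y hy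
        simp only [SimpleGraph.compl_adj, not_and, not_not] at this
        exact this.2 this.1
      have hB' : B' ⊆ A := fun x hx => by
        by_contra hxA
        have hxS := hB hx
        rw [← hs.1] at hxS
        exact (h2 x hx).2 (hadj w hw x (hxS.resolve_left hxA))
      obtain ⟨y, hy⟩ := h5.nonempty
      have hA' : A' ⊆ A := fun x hx => by
        by_contra hxA
        have hxS := hA hx
        rw [← hs.1] at hxS
        exact (h3 x hx y hy).2 (hadj y (hB' hy) x (hxS.resolve_left hxA)).symm
      exact ⟨w, hw, A', hA', B', hB', h1, h2, h3, h4, h5⟩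
    obtain ⟨w, hw, A', hA, B', hB, h1, h2, h3, h4, h5⟩ := h
    rw [← hs.1] at hw
    rcases hw with hw | hw
    · exact Or.inl (key A B hs w hw A' hA B' hB h1 h2 h3 h4 h5)
    · exact Or.inr (key B A hs.symm w hw A' hA B' hB h1 h2 h3 h4 h5)

theorem HasJQ.of_union {n : ℕ} {A B : Set V} (h : HasJQ G n S) (hs : Split G S A B) :
    HasJQ G n A ∨ HasJQ G n B := by
  have key : ∀ A B : Set V, Split G S A B → ∀ w ∈ A, ∀ A' ⊆ S, (∀ x ∈ A', G.Adj w x) →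
      HasQ G n A' → HasJQ G n A := by
    intro A B hs w hw A' hA h1 h2
    refine ⟨w, hw, A', fun x hx => ?_, h1, h2⟩
    by_contra hxA
    have hxS := hA hx
    rw [← hs.1] at hxS
    exact (hs.2.2.2 w hw x (hxS.resolve_left hxA)).2 (h1 x hx)
  obtain ⟨w, hw, A', hA, h1, h2⟩ := h
  rw [← hs.1] at hw
  rcases hw with hw | hw
  · exact Or.inl (key A B hs w hw A' hA h1 h2)
  · exact Or.inr (key B A hs.symm w hw A' hA h1 h2)

theorem HasQ.succ_of_union {n : ℕ} {A B : Set V} (hs : Split G S A B) (hA : HasJQ G n A)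
    (hB : HasQ G n B) : HasQ G (n + 1) S := by
  obtain ⟨w, hw, A', hA', h1, h2⟩ := hA
  exact ⟨w, hs.subset hw, A', hA'.trans hs.subset, B, hs.symm.subset, h1,
    fun x hx => hs.2.2.2 w hw x hx, fun x hx y hy => hs.2.2.2 x (hA' hx) y hy, h2, hB⟩

/-- Two distinct blocks are separated by a vertex outside both of them; depending on whether they are
adjacent this produces the next quasi-threshold or co-quasi-threshold pattern. -/
theorem Blocks.heavy_unique (hM : Blocks G S M) (h0 : ∀ A B, ¬ Split G S A B)
    (h1 : ∀ A B, ¬ Split Gᶜ S A B) {a b : ℕ} (hQ : ¬ HasQ G (a + 1) S)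
    (hQ' : ¬ HasQ Gᶜ (b + 1) S) {u v : V} (hu : u ∈ S) (hv : v ∈ S) (hne : M u ≠ M v)
    (hua : HasQ G a (M u)) (hub : HasQ Gᶜ b (M u)) (hva : HasQ G a (M v))
    (hvb : HasQ Gᶜ b (M v)) : False := by
  have hdis : ∀ x ∈ M u, ∀ y ∈ M v, x ≠ y := by
    rintro x hx y hy rfl
    exact hne (by rw [← hM.eq u hu x hx, hM.eq v hv x hy])
  have hadj : ∀ x ∈ M u, ∀ y ∈ M v, (G.Adj u v ↔ G.Adj x y) := fun x hx y hy =>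
    hM.adj_iff hu hv hne hx hy
  obtain ⟨w, hw, hwu, hwv, hsep⟩ : ∃ w ∈ S, w ∉ M u ∧ w ∉ M v ∧ ¬ (G.Adj w u ↔ G.Adj w v) := by
    by_contra! hcon
    have hmod : ModOn G S (M u ∪ M v) := by
      have key : ∀ x ∈ M u ∪ M v, ∀ w ∈ S, w ∉ M u ∪ M v → (G.Adj w x ↔ G.Adj w u) := by
        rintro x (hx | hx) w hw hwn
        · exact hM.mod u hu x hx u (hM.mem u hu) w hw (fun h => hwn (Or.inl h))
        · rw [hM.mod v hv x hx v (hM.mem v hv) w hw (fun h => hwn (Or.inr h))]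
          exact (hcon w hw (fun h => hwn (Or.inl h)) (fun h => hwn (Or.inr h))).symm
      intro x hx y hy w hw hwn
      rw [key x hx w hw hwn, key y hy w hw hwn]
    rcases hM.max u hu _ (Set.union_subset (hM.sub u hu) (hM.sub v hv)) hmod
      Set.subset_union_left with h | h
    · have : v ∈ M u := h ▸ Or.inr (hM.mem v hv)
      exact hdis v this v (hM.mem v hv) rfl
    · by_cases huv : G.Adj u v
      · refine h1 _ _ ⟨h, ⟨u, hM.mem u hu⟩, ⟨v, hM.mem v hv⟩, fun x hx y hy => ⟨hdis x hx y hy, ?_⟩⟩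
        simp [SimpleGraph.compl_adj, (hadj x hx y hy).1 huv]
      · exact h0 _ _ ⟨h, ⟨u, hM.mem u hu⟩, ⟨v, hM.mem v hv⟩, fun x hx y hy =>
          ⟨hdis x hx y hy, fun h => huv ((hadj x hx y hy).2 h)⟩⟩
  -- It suffices to treat the case in which `w` is adjacent to the first block only.
  have key : ∀ u ∈ S, ∀ v ∈ S, w ∉ M u → w ∉ M v → (∀ x ∈ M u, ∀ y ∈ M v, x ≠ y) →
      (∀ x ∈ M u, ∀ y ∈ M v, (G.Adj u v ↔ G.Adj x y)) → HasQ G a (M u) → HasQ Gᶜ b (M u) →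
      HasQ G a (M v) → HasQ Gᶜ b (M v) → G.Adj w u → ¬ G.Adj w v → False := by
    intro u hu v hv hwu hwv hdis hadj hua hub hva hvb h1 h2
    have h1' : ∀ x ∈ M u, G.Adj w x := fun x hx =>
      (hM.mod u hu u (hM.mem u hu) x hx w hw hwu).1 h1
    have h2' : ∀ x ∈ M v, w ≠ x ∧ ¬ G.Adj w x := fun x hx =>
      ⟨fun h => hwv (h ▸ hx), fun h => h2 ((hM.mod v hv x hx v (hM.mem v hv) w hw hwv).1 h)⟩
    by_cases huv : G.Adj u v
    · refine hQ' ⟨w, hw, M v, hM.sub v hv, M u, hM.sub u hu, ?_, ?_, ?_, hvb, hub⟩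
      · intro x hx
        exact (SimpleGraph.compl_adj ..).2 (h2' x hx)
      · intro x hx
        have := h1' x hx
        exact ⟨this.ne, by simp [SimpleGraph.compl_adj, this]⟩
      · intro x hx y hy
        exact ⟨(hdis y hy x hx).symm, by
          simp [SimpleGraph.compl_adj, ((hadj y hy x hx).1 huv).symm]⟩
    · exact hQ ⟨w, hw, M u, hM.sub u hu, M v, hM.sub v hv, h1', h2',
        fun x hx y hy => ⟨hdis x hx y hy, fun h => huv ((hadj x hx y hy).2 h)⟩, hua, hva⟩
  by_cases hwu' : G.Adj w u
  · exact key u hu v hv hwu hwv hdis hadj hua hub hva hvb hwu' (fun h => hsep (by simp [hwu', h]))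
  · refine key v hv u hu hwv hwu (fun x hx y hy => (hdis y hy x hx).symm)
      (fun x hx y hy => ?_) hva hvb hua hub (by by_contra h; exact hsep (by simp [hwu', h])) hwu'
    rw [G.adj_comm v u, G.adj_comm x y]
    exact hadj y hy x hx

/-! ### The upper bound -/

variable {p L a b : ℕ}

/-- If the joins of a vertex with the pattern of index `a` are excluded as well, then all blocks in
the decomposition are light, and the bound holds with the empty neighbourhood not counted. -/
theorem nwNELE_of_not_hasJQ [Finite V] (hp : ∀ T : Set V, PrimeOn G T → NwLE G T p)
    (hL : ∀ T : Set V, ¬ HasQ G a T → ¬ HasQ Gᶜ (b + 1) T → NwLE G T L) (S : Set V) :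
    ¬ HasQ Gᶜ (b + 1) S → ¬ HasJQ G a S → NwNELE G S (p + 1 + L) := by
  induction S using WellFoundedLT.induction with
  | ind S ih =>
  intro hQ' hJ
  by_cases hS : S.Nontrivial
  swap
  · exact (nwLE_of_subsingleton (Set.not_nontrivial_iff.1 hS) (by omega)).toNE
  by_cases hs : ∃ A B, Split G S A B
  · obtain ⟨A, B, hs⟩ := hs
    exact hs.nwNELE
      (ih A hs.ssubset (fun h => hQ' (h.mono hs.subset)) (fun h => hJ (h.mono hs.subset)))
      (ih B hs.symm.ssubset (fun h => hQ' (h.mono hs.symm.subset))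
        (fun h => hJ (h.mono hs.symm.subset)))
  by_cases hs' : ∃ A B, Split Gᶜ S A B
  · obtain ⟨A, B, hs'⟩ := hs'
    have key : ∀ A B, Split Gᶜ S A B → ¬ HasQ G a A := by
      intro A B hs' hA
      obtain ⟨w, hw⟩ := hs'.2.2.1
      refine hJ ⟨w, hs'.symm.subset hw, A, hs'.subset, fun x hx => ?_, hA⟩
      have := hs'.2.2.2 x hx w hw
      simp only [SimpleGraph.compl_adj, not_and, not_not] at this
      exact (this.2 this.1).symm
    have : ¬ HasQ G a S := fun h =>
      (h.of_join hs').elim (key A B hs') (key B A hs'.symm)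
    exact (hL S this hQ').toNE.mono (by omega)
  · push Not at hs hs'
    obtain ⟨M, hM⟩ := exists_blocks hS hs hs'
    have hlight : ∀ x ∈ S, NwLE G (M x) L := by
      intro x hx
      refine hL _ (fun hQ => ?_) (fun h => hQ' (h.mono (hM.sub x hx)))
      -- A vertex outside the block is complete to it, since the block does not split off.
      refine hs (M x) (S \ M x) ⟨by simpa using hM.sub x hx, ⟨x, hM.mem x hx⟩, ?_, ?_⟩
      · by_contra hemp
        rw [Set.not_nonempty_iff_eq_empty, Set.sdiff_eq_empty] at hemp
        exact hM.ne x hx ((hM.sub x hx).antisymm hemp)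
      · intro y hy w hw
        refine ⟨fun h => hw.2 (h ▸ hy), fun hadj => ?_⟩
        exact hJ ⟨w, hw.1, M x, hM.sub x hx,
          fun z hz => (hM.mod x hx y hy z hz w hw.1 hw.2).1 hadj.symm, hQ⟩
    obtain ⟨x, hx⟩ := hS.nonempty
    exact (hM.nwLE hp le_rfl hx ((hlight x hx).mono (by omega))
      (fun y hy _ => hlight y hy)).toNE

/-- The inductive step for a disjoint union. -/
theorem nwLE_of_split [Finite V] (hp : ∀ T : Set V, PrimeOn G T → NwLE G T p)
    (hL : ∀ T : Set V, ¬ HasQ G a T → ¬ HasQ Gᶜ (b + 1) T → NwLE G T L)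
    (hQ : ¬ HasQ G (a + 1) S) (hQ' : ¬ HasQ Gᶜ (b + 1) S) {A B : Set V} (hs : Split G S A B)
    (hA : NwLE G A (p + 2 + L)) (hB : NwLE G B (p + 2 + L)) : NwLE G S (p + 2 + L) := by
  have hQA : ¬ HasQ G (a + 1) A := fun h => hQ (h.mono hs.subset)
  have hQB : ¬ HasQ G (a + 1) B := fun h => hQ (h.mono hs.symm.subset)
  have hQA' : ¬ HasQ Gᶜ (b + 1) A := fun h => hQ' (h.mono hs.subset)
  have hQB' : ¬ HasQ Gᶜ (b + 1) B := fun h => hQ' (h.mono hs.symm.subset)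
  by_cases hlA : NwLE G A L
  · exact hs.symm.nwLE hB hlA (by omega)
  by_cases hlB : NwLE G B L
  · exact hs.nwLE hA hlB (by omega)
  have hA1 : HasQ G a A := by by_contra h; exact hlA (hL A h hQA')
  have hB1 : HasQ G a B := by by_contra h; exact hlB (hL B h hQB')
  have hJ : ¬ HasJQ G a S := fun h => (h.of_union hs).elim
    (fun h => hQ (HasQ.succ_of_union hs h hB1)) (fun h => hQ (HasQ.succ_of_union hs.symm h hA1))
  exact (nwNELE_of_not_hasJQ hp hL S hQ' hJ).toNw.mono (by omega)

/-- If sets excluding one pattern of smaller index have neighbourhood-width at most `L`, then sets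
excluding the patterns of indices `a + 1` and `b + 1` have neighbourhood-width at most
`p + 2 + L`. -/
theorem nwLE_step [Finite V] (hp : ∀ T : Set V, PrimeOn G T → NwLE G T p)
    (hL : ∀ T : Set V, ¬ HasQ G a T → ¬ HasQ Gᶜ (b + 1) T → NwLE G T L)
    (hL' : ∀ T : Set V, ¬ HasQ G (a + 1) T → ¬ HasQ Gᶜ b T → NwLE G T L) (S : Set V) :
    ¬ HasQ G (a + 1) S → ¬ HasQ Gᶜ (b + 1) S → NwLE G S (p + 2 + L) := by
  induction S using WellFoundedLT.induction with
  | ind S ih =>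
  intro hQ hQ'
  by_cases hS : S.Nontrivial
  swap
  · exact nwLE_of_subsingleton (Set.not_nontrivial_iff.1 hS) (by omega)
  have ih' : ∀ T ⊂ S, NwLE G T (p + 2 + L) := fun T hT =>
    ih T hT (fun h => hQ (h.mono hT.1)) (fun h => hQ' (h.mono hT.1))
  by_cases hs : ∃ A B, Split G S A B
  · obtain ⟨A, B, hs⟩ := hs
    exact nwLE_of_split hp hL hQ hQ' hs (ih' A hs.ssubset) (ih' B hs.symm.ssubset)
  by_cases hs' : ∃ A B, Split Gᶜ S A B
  · obtain ⟨A, B, hs'⟩ := hs'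
    refine NwLE.of_compl (nwLE_of_split (G := Gᶜ) (a := b) (b := a)
      (fun T hT => (hp T hT.of_compl).compl)
      (fun T h1 h2 => (hL' T (by simpa using h2) h1).compl)
      hQ' (by simpa using hQ) hs' (ih' A hs'.ssubset).compl (ih' B hs'.symm.ssubset).compl)
  · push Not at hs hs'
    obtain ⟨M, hM⟩ := exists_blocks hS hs hs'
    have hlight : ∀ x ∈ S, ¬ NwLE G (M x) L → HasQ G a (M x) ∧ HasQ Gᶜ b (M x) := by
      intro x hx hn
      constructor
      · by_contra h
        exact hn (hL _ h (fun h => hQ' (h.mono (hM.sub x hx))))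
      · by_contra h
        exact hn (hL' _ (fun h => hQ (h.mono (hM.sub x hx))) h)
    obtain ⟨x, hx, hx'⟩ : ∃ x ∈ S, ∀ y ∈ S, M y ≠ M x → NwLE G (M y) L := by
      by_cases hall : ∀ y ∈ S, NwLE G (M y) L
      · obtain ⟨x, hx⟩ := hS.nonempty
        exact ⟨x, hx, fun y hy _ => hall y hy⟩
      · push Not at hall
        obtain ⟨x, hx, hxn⟩ := hall
        refine ⟨x, hx, fun y hy hne => ?_⟩
        by_contra hyn
        exact hM.heavy_unique hs hs' hQ hQ' hy hx hne (hlight y hy hyn).1 (hlight y hy hyn).2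
          (hlight x hx hxn).1 (hlight x hx hxn).2
    exact hM.nwLE hp (by omega) hx
      (ih' _ ((hM.sub x hx).ssubset_of_ne (hM.ne x hx))) hx'

theorem nwLE_of_not_hasQ [Finite V] (hp : ∀ T : Set V, PrimeOn G T → NwLE G T p) :
    ∀ (a b : ℕ) (S : Set V), ¬ HasQ G a S → ¬ HasQ Gᶜ b S → NwLE G S ((p + 2) * (a + b))
  | 0, _, S, h, _ | _, 0, S, _, h => by
    rw [Set.not_nonempty_iff_eq_empty.1 h]
    exact .empty (good_empty _)
  | a + 1, b + 1, S, h1, h2 => by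
    have h3 : ∀ T : Set V, ¬ HasQ G a T → ¬ HasQ Gᶜ (b + 1) T →
        NwLE G T ((p + 2) * (a + b + 1)) := nwLE_of_not_hasQ hp a (b + 1)
    have h4 : ∀ T : Set V, ¬ HasQ G (a + 1) T → ¬ HasQ Gᶜ b T →
        NwLE G T ((p + 2) * (a + b + 1)) := fun T h h' =>
      (nwLE_of_not_hasQ hp (a + 1) b T h h').mono (by rw [Nat.add_right_comm])
    exact (nwLE_step hp h3 h4 S h1 h2).mono (le_of_eq (by ring))

end Width

/-! ### Linear clique-width and neighbourhood-width -/

section Lcw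

variable {V : Type} {k : ℕ}

/-- Edges are only ever created between introduced vertices. -/
theorem LCWStep.adj_verts {C D : LCWConfig V k} (h : LCWStep C D)
    (hC : ∀ x y, C.adj x y → x ∈ C.verts ∧ y ∈ C.verts) :
    ∀ x y, D.adj x y → x ∈ D.verts ∧ y ∈ D.verts := by
  cases h with
  | intro v hv c => exact fun x y h => ⟨Or.inr (hC x y h).1, Or.inr (hC x y h).2⟩
  | join i j hij => exact fun x y h => h.elim (hC x y) (fun h => ⟨h.1, h.2.1⟩)
  | relabel i j hij => exact hC

/-- Vertices carrying the same label are treated alike by all later operations. -/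
theorem LCWStep.twins {C D : LCWConfig V k} (h : Relation.ReflTransGen LCWStep C D) {x y z : V}
    (hx : x ∈ C.verts) (hy : y ∈ C.verts) (hl : C.lab x = C.lab y)
    (hz : C.adj x z ↔ C.adj y z) : D.adj x z ↔ D.adj y z := by
  have key : x ∈ D.verts ∧ y ∈ D.verts ∧ D.lab x = D.lab y ∧ (D.adj x z ↔ D.adj y z) := by
    induction h with
    | refl => exact ⟨hx, hy, hl, hz⟩
    | tail _ hstep ih =>
      obtain ⟨h1, h2, h3, h4⟩ := ih
      cases hstep with
      | intro v hv c =>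
        have hxv : x ≠ v := fun h => hv (h ▸ h1)
        have hyv : y ≠ v := fun h => hv (h ▸ h2)
        exact ⟨Or.inr h1, Or.inr h2, by simp [hxv, hyv, h3], h4⟩
      | join i j hij => exact ⟨h1, h2, h3, by simp [h1, h2, h3, h4]⟩
      | relabel i j hij => exact ⟨h1, h2, by simp [h3], h4⟩
  exact key.2.2.2

theorem nwLE_of_lcwLE {G : SimpleGraph V} (h : lcwLE G k) : NwLE G Set.univ k := by
  obtain ⟨ℓ₀, ℓ, h⟩ := h
  have key : ∀ C : LCWConfig V k,
      Relation.ReflTransGen LCWStep (⟨∅, fun _ _ => False, ℓ₀⟩ : LCWConfig V k) C →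
      Relation.ReflTransGen LCWStep C ⟨Set.univ, G.Adj, ℓ⟩ →
      (∀ x y, C.adj x y → x ∈ C.verts ∧ y ∈ C.verts) ∧
        Reach Set.univ (Good G Set.univ k) C.verts := by
    intro C hC
    induction hC with
    | refl => exact fun _ => ⟨fun _ _ h => h.elim, .empty (good_empty k)⟩
    | @tail C D hC hstep ih =>
      intro hD
      obtain ⟨h1, h2⟩ := ih (.head hstep hD)
      have h3 := hstep.adj_verts h1
      refine ⟨h3, ?_⟩
      have hgood : Good G Set.univ k D.verts := by
        refine ⟨fun x => D.lab x, fun x _ => (D.lab x).2, fun x hx y hy hxy z _ hz => ?_⟩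
        exact LCWStep.twins hD hx hy (Fin.ext hxy)
          ⟨fun h => absurd (h3 _ _ h).2 hz, fun h => absurd (h3 _ _ h).2 hz⟩
      cases hstep with
      | intro v hv c => exact .insert _ v h2 trivial hv hgood
      | join i j hij => exact h2
      | relabel i j hij => exact h2
  exact (key _ h .refl).2

/-- Joining the label `f` with every label of a finite set `J`. -/
theorem joins_reachable (C : LCWConfig V k) (f : Fin k) (J : Finset (Fin k)) (hJ : f ∉ J) :
    Relation.ReflTransGen LCWStep C ⟨C.verts, fun x y => C.adj x y ∨
      (x ∈ C.verts ∧ y ∈ C.verts ∧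
        ((C.lab x = f ∧ C.lab y ∈ J) ∨ (C.lab x ∈ J ∧ C.lab y = f))), C.lab⟩ := by
  induction J using Finset.induction_on with
  | empty =>
    simp only [Finset.notMem_empty, and_false, false_and, or_false]
    exact .refl
  | insert j J hj ih =>
    simp only [Finset.mem_insert, not_or] at hJ
    refine (ih hJ.2).tail ?_
    convert LCWStep.join _ f j hJ.1 using 2
    funext x y
    simp only [Finset.mem_insert, eq_iff_iff]
    tauto

theorem lcwLE_of_nwLE {G : SimpleGraph V} (h : NwLE G Set.univ k) : lcwLE G (k + 1) := by
  -- One label `f` is kept unused; a new vertex receives it, and if afterwards all `k + 1` labels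
  -- are in use, then two of them belong to vertices with equal neighbourhoods and can be merged.
  have key : ∀ P, Reach Set.univ (Good G Set.univ k) P → ∃ ℓ : V → Fin (k + 1),
      Relation.ReflTransGen LCWStep
        (⟨∅, fun _ _ => False, fun _ => 0⟩ : LCWConfig V (k + 1))
        ⟨P, fun x y => x ∈ P ∧ y ∈ P ∧ G.Adj x y, ℓ⟩ ∧
      (∀ x ∈ P, ∀ y ∈ P, ℓ x = ℓ y → ∀ z ∉ P, (G.Adj x z ↔ G.Adj y z)) ∧
      ∃ f, ∀ x ∈ P, ℓ x ≠ f := by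
    intro P hP
    induction hP with
    | empty _ =>
      refine ⟨fun _ => 0, ?_, by simp, 0, by simp⟩
      simp only [Set.mem_empty_iff_false, false_and]
      exact .refl
    | insert P v hP _ hvP hgood ih =>
      obtain ⟨ℓ, hrun, htwin, f, hf⟩ := ih
      let ℓ' : V → Fin (k + 1) := fun x => if x = v then f else ℓ x
      have hv' : ℓ' v = f := by simp [ℓ']
      have hP' : ∀ x ∈ P, ℓ' x = ℓ x := fun x hx => by
        have : x ≠ v := fun h => hvP (h ▸ hx)
        simp [ℓ', this]
      let J : Finset (Fin (k + 1)) := Finset.univ.filter (fun i => ∃ x ∈ P, ℓ x = i ∧ G.Adj x v)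
      have hJ : ∀ x ∈ P, (ℓ x ∈ J ↔ G.Adj x v) := by
        intro x hx
        simp only [J, Finset.mem_filter, Finset.mem_univ, true_and]
        refine ⟨?_, fun h => ⟨x, hx, rfl, h⟩⟩
        rintro ⟨y, hy, hyx, hyv⟩
        exact (htwin y hy x hx hyx v hvP).1 hyv
      have hfJ : f ∉ J := by
        simp only [J, Finset.mem_filter, Finset.mem_univ, true_and]
        rintro ⟨x, hx, hxf, -⟩
        exact hf x hx hxf
      have hrun' : Relation.ReflTransGen LCWStep
          (⟨∅, fun _ _ => False, fun _ => 0⟩ : LCWConfig V (k + 1))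
          ⟨insert v P, fun x y => x ∈ insert v P ∧ y ∈ insert v P ∧ G.Adj x y, ℓ'⟩ := by
        refine (hrun.tail (LCWStep.intro _ v hvP f)).trans ?_
        convert joins_reachable _ f J hfJ using 2
        funext x y
        simp only [eq_iff_iff]
        change _ ↔ _ ∨ x ∈ insert v P ∧ y ∈ insert v P ∧
          (ℓ' x = f ∧ ℓ' y ∈ J ∨ ℓ' x ∈ J ∧ ℓ' y = f)
        by_cases hxv : x = v <;> by_cases hyv : y = v
        · subst hxv; subst hyv
          simp [hv', hfJ, hvP]
        · subst hxv
          by_cases hy : y ∈ P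
          · simp [hv', hfJ, hvP, hyv, hy, hP' y hy, hJ y hy, G.adj_comm x y]
          · simp [hyv, hy]
        · subst hyv
          by_cases hx : x ∈ P
          · simp [hv', hfJ, hvP, hxv, hx, hP' x hx, hJ x hx]
          · simp [hxv, hx]
        · by_cases hx : x ∈ P
          · by_cases hy : y ∈ P
            · simp [hxv, hyv, hx, hy, hP' x hx, hP' y hy, hf x hx, hf y hy]
            · simp [hyv, hy]
          · simp [hxv, hx]
      have htwin' : ∀ x ∈ insert v P, ∀ y ∈ insert v P, ℓ' x = ℓ' y → ∀ z ∉ insert v P,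
          (G.Adj x z ↔ G.Adj y z) := by
        intro x hx y hy hxy z hz
        simp only [Set.mem_insert_iff, not_or] at hz
        rcases hx with rfl | hx <;> rcases hy with rfl | hy
        · rfl
        · rw [hv', hP' y hy] at hxy
          exact absurd hxy.symm (hf y hy)
        · rw [hv', hP' x hx] at hxy
          exact absurd hxy (hf x hx)
        · rw [hP' x hx, hP' y hy] at hxy
          exact htwin x hx y hy hxy z hz.2
      by_cases hfree : ∃ f', ∀ x ∈ insert v P, ℓ' x ≠ f'
      · exact ⟨ℓ', hrun', htwin', hfree⟩
      · push Not at hfree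
        choose rep hrep hlab using hfree
        obtain ⟨c, hc1, hc2⟩ := hgood
        obtain ⟨i, j, hij, hcij⟩ : ∃ i j : Fin (k + 1), i ≠ j ∧ c (rep i) = c (rep j) := by
          have := Fintype.exists_ne_map_eq_of_card_lt
            (fun i : Fin (k + 1) => (⟨c (rep i), hc1 _ (hrep i)⟩ : Fin k)) (by simp)
          simpa using this
        have hsame : ∀ z ∉ insert v P, (G.Adj (rep i) z ↔ G.Adj (rep j) z) :=
          fun z hz => hc2 _ (hrep i) _ (hrep j) hcij z trivial hz
        refine ⟨_, hrun'.tail (LCWStep.relabel _ i j hij), ?_, i, ?_⟩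
        · have hto : ∀ x ∈ insert v P, ∀ z ∉ insert v P,
              (G.Adj x z ↔ G.Adj (rep (if ℓ' x = i then j else ℓ' x)) z) := by
            intro x hx z hz
            split_ifs with h
            · rw [← hsame z hz]
              exact htwin' x hx _ (hrep i) (by rw [hlab, h]) z hz
            · exact htwin' x hx _ (hrep _) (by rw [hlab]) z hz
          intro x hx y hy hxy z hz
          have hxy' : (if ℓ' x = i then j else ℓ' x) = if ℓ' y = i then j else ℓ' y := hxy
          rw [hto x hx z hz, hto y hy z hz, hxy']
        · intro x hx
          change (if ℓ' x = i then j else ℓ' x) ≠ i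
          split_ifs with h
          · exact hij.symm
          · exact h
  obtain ⟨ℓ, hrun, -⟩ := key _ h
  refine ⟨fun _ => 0, ℓ, ?_⟩
  simpa using hrun

theorem lcw_le_of_nwLE {G : SimpleGraph V} (h : NwLE G Set.univ k) : lcw G ≤ k + 1 :=
  Nat.sInf_le (lcwLE_of_nwLE h)

/-- Finiteness guarantees that the infimum defining `lcw` is attained. -/
theorem nwLE_of_lcw_le [Finite V] {G : SimpleGraph V} (h : lcw G ≤ k) : NwLE G Set.univ k := by
  have : lcwLE G (lcw G) :=
    Nat.sInf_mem (s := {k | lcwLE G k}) ⟨_, lcwLE_of_nwLE nwLE_card⟩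
  exact (nwLE_of_lcwLE this).mono h

end Lcw

/-! ### Transport along embeddings -/

section Transport

variable {V W : Type}

theorem NwLE.map {H : SimpleGraph W} {G : SimpleGraph V} (e : H ↪g G) {k : ℕ}
    (h : NwLE H Set.univ k) : NwLE G (Set.range e) k := by
  have hgood : ∀ P : Set W, Good H Set.univ k P → Good G (Set.range e) k (e '' P) := by
    rintro P ⟨c, h1, h2⟩
    refine ⟨fun x => if h : x ∈ Set.range e then c h.choose else 0, ?_, ?_⟩
    · rintro _ ⟨x, hx, rfl⟩
      have h : e x ∈ Set.range e := ⟨x, rfl⟩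
      have h' : h.choose = x := e.injective h.choose_spec
      simp only [h, dif_pos, h']
      exact h1 x hx
    · rintro _ ⟨x, hx, rfl⟩ _ ⟨y, hy, rfl⟩ hxy _ ⟨z, rfl⟩ hz
      have hX : e x ∈ Set.range e := ⟨x, rfl⟩
      have hX' : hX.choose = x := e.injective hX.choose_spec
      have hY : e y ∈ Set.range e := ⟨y, rfl⟩
      have hY' : hY.choose = y := e.injective hY.choose_spec
      simp only [hX, hY, dif_pos, hX', hY'] at hxy
      rw [e.map_adj_iff, e.map_adj_iff]
      exact h2 x hx y hy hxy z trivial (fun h => hz ⟨z, h, rfl⟩)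
  have key : ∀ P, Reach Set.univ (Good H Set.univ k) P →
      Reach (Set.range e) (Good G (Set.range e) k) (e '' P) := by
    intro P hP
    induction hP with
    | empty h0 => simpa using Reach.empty (S := Set.range e) (by simpa using hgood _ h0)
    | insert P v _ _ hvP hg ih =>
      have := hgood _ hg
      rw [Set.image_insert_eq] at this ⊢
      exact .insert _ _ ih ⟨v, rfl⟩ (fun ⟨x, hx, hxv⟩ => hvP (e.injective hxv ▸ hx)) this
  simpa [NwLE] using key _ h

/-- Prime vertex sets of members of a hereditary class inherit the bound for prime members. -/
theorem nwLE_of_primeOn {C : ∀ n : ℕ, Set (SimpleGraph (Fin n))} (hC : Hereditary C) {p : ℕ}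
    (hp : ∀ n : ℕ, ∀ G ∈ C n, IsPrime G → lcw G ≤ p) {n : ℕ} {G : SimpleGraph (Fin n)}
    (hG : G ∈ C n) {T : Set (Fin n)} (hT : PrimeOn G T) : NwLE G T p := by
  let m := Nat.card T
  let σ : Fin m ≃ T := (Finite.equivFin T).symm
  let e' : Fin m ↪ Fin n := σ.toEmbedding.trans (Function.Embedding.subtype _)
  let H : SimpleGraph (Fin m) := G.comap e'
  let e : H ↪g G := SimpleGraph.Embedding.comap e' G
  have he : ∀ x, e x = (σ x : Fin n) := fun _ => rfl
  have hrange : Set.range e = T := by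
    ext x
    refine ⟨?_, fun hx => ⟨σ.symm ⟨x, hx⟩, by simp [he]⟩⟩
    rintro ⟨y, rfl⟩
    exact (σ y).2
  have hprime : IsPrime H := by
    constructor
    · rw [Nat.card_fin]
      have : Nontrivial T := Set.nontrivial_coe_sort.2 hT.1
      exact Finite.one_lt_card
    · intro N hN
      have hsub : e '' N ⊆ T := hrange ▸ Set.image_subset_range e N
      have hmod : ModOn G T (e '' N) := by
        rintro _ ⟨u, hu, rfl⟩ _ ⟨v, hv, rfl⟩ w hw hwn
        rw [← hrange] at hw
        obtain ⟨w, rfl⟩ := hw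
        rw [e.map_adj_iff, e.map_adj_iff]
        exact hN u hu v hv w (fun h => hwn ⟨w, h, rfl⟩)
      rcases hT.2 _ hsub hmod with h | h
      · exact Or.inl (fun x hx y hy => e.injective (h ⟨x, hx, rfl⟩ ⟨y, hy, rfl⟩))
      · right
        rw [← hrange, ← Set.image_univ] at h
        exact e.injective.image_injective h
  have := (nwLE_of_lcw_le (hp m H (hC H G ⟨e⟩ hG) hprime)).map e
  rwa [hrange] at this

theorem gJoin_adj_inr {α β : Type} (G : SimpleGraph α) (H : SimpleGraph β) (x y : β) :
    (GJoin G H).Adj (Sum.inr x) (Sum.inr y) ↔ H.Adj x y := by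
  by_cases hxy : x = y
  · simp [GJoin, hxy]
  · simp [GJoin, hxy]

theorem gJoin_adj_inl_inr {α β : Type} (G : SimpleGraph α) (H : SimpleGraph β) (x : α) (y : β) :
    (GJoin G H).Adj (Sum.inl x) (Sum.inr y) := by
  simp [GJoin]

/-- Every quasi-threshold graph embeds into all sufficiently large universal patterns. -/
theorem IsQT.exists_embedding {W : Type} {Q : SimpleGraph W} (hQ : IsQT Q) :
    ∃ n, ∀ {V : Type} (G : SimpleGraph V) (S : Set V), HasQ G n S →
      ∃ e : Q ↪g G, ∀ x, e x ∈ S := by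
  induction hQ with
  | single =>
    refine ⟨0, fun {V} G S ⟨v, hv⟩ => ⟨⟨⟨fun _ => v, fun _ _ _ => Subsingleton.elim _ _⟩, ?_⟩,
      fun _ => hv⟩⟩
    intro x y
    change G.Adj v v ↔ _
    simp
  | @joinK1 W Q _ ih =>
    obtain ⟨n, hn⟩ := ih
    refine ⟨n + 1, fun {V} G S ⟨w, hw, A, hA, B, hB, h1, h2, h3, h4, h5⟩ => ?_⟩
    obtain ⟨e, he⟩ := hn G A h4
    have hwe : ∀ x, w ≠ e x := fun x => (h1 _ (he x)).ne
    refine ⟨⟨⟨Sum.elim (fun _ => w) e, ?_⟩, ?_⟩, ?_⟩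
    · rintro (x | x) (y | y) h
      · exact congrArg _ (Subsingleton.elim _ _)
      · exact absurd h (hwe y)
      · exact absurd h.symm (hwe x)
      · exact congrArg _ (e.injective h)
    · rintro (x | x) (y | y)
      · change G.Adj w w ↔ _
        simp [GJoin, Subsingleton.elim x y]
      · change G.Adj w (e y) ↔ _
        simpa [GJoin] using h1 _ (he y)
      · change G.Adj (e x) w ↔ _
        simpa [GJoin] using (h1 _ (he x)).symm
      · change G.Adj (e x) (e y) ↔ _
        rw [e.map_adj_iff, gJoin_adj_inr]
    · rintro (x | x)
      · exact hw
      · exact hA (he x)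
  | @union W₁ W₂ Q₁ Q₂ _ _ ih₁ ih₂ =>
    obtain ⟨n₁, hn₁⟩ := ih₁
    obtain ⟨n₂, hn₂⟩ := ih₂
    refine ⟨max n₁ n₂ + 1, fun {V} G S ⟨w, hw, A, hA, B, hB, h1, h2, h3, h4, h5⟩ => ?_⟩
    obtain ⟨e₁, he₁⟩ := hn₁ G A (h4.of_le (le_max_left _ _))
    obtain ⟨e₂, he₂⟩ := hn₂ G B (h5.of_le (le_max_right _ _))
    have h12 := fun x y => h3 _ (he₁ x) _ (he₂ y)
    refine ⟨⟨⟨Sum.elim e₁ e₂, ?_⟩, ?_⟩, ?_⟩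
    · rintro (x | x) (y | y) h
      · exact congrArg _ (e₁.injective h)
      · exact absurd h (h12 x y).1
      · exact absurd h.symm (h12 y x).1
      · exact congrArg _ (e₂.injective h)
    · rintro (x | x) (y | y)
      · change G.Adj (e₁ x) (e₁ y) ↔ _
        simp
      · change G.Adj (e₁ x) (e₂ y) ↔ _
        simpa using (h12 x y).2
      · change G.Adj (e₂ x) (e₁ y) ↔ _
        simpa [G.adj_comm] using (h12 y x).2
      · change G.Adj (e₂ x) (e₂ y) ↔ _
        simp
    · rintro (x | x)
      · exact hA (he₁ x)
      · exact hB (he₂ x)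
  | iso _ hiso ih =>
    obtain ⟨n, hn⟩ := ih
    obtain ⟨i⟩ := hiso
    refine ⟨n, fun {V} G S h => ?_⟩
    obtain ⟨e, he⟩ := hn G S h
    exact ⟨e.comp i.symm.toEmbedding, fun x => he _⟩

end Transport

/-! ### The lower bound -/

section LowerBound

variable {V W : Type}

/-- Every linear order of the vertices (given by an injective numbering `f`) has a cut at which `k`
vertices of the left side have nonempty, pairwise distinct neighbourhoods on the right side. -/
def ForcesWidth (G : SimpleGraph V) (k : ℕ) : Prop :=
  ∀ f : V → ℕ, Function.Injective f → ∃ t, ∃ X : Fin k → V, (∀ i, f (X i) < t) ∧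
    (∀ i, ∃ z, t ≤ f z ∧ G.Adj (X i) z) ∧
    ∀ i j, i ≠ j → ∃ z, t ≤ f z ∧ ¬ (G.Adj (X i) z ↔ G.Adj (X j) z)

theorem NwLE.exists_numbering {G : SimpleGraph V} {k : ℕ} (h : NwLE G Set.univ k) :
    ∃ f : V → ℕ, Function.Injective f ∧ ∀ t, Good G Set.univ k {x | f x < t} := by
  have key : ∀ P, Reach Set.univ (Good G Set.univ k) P → ∃ (f : V → ℕ) (N : ℕ), Set.InjOn f P ∧
      (∀ x ∈ P, f x < N) ∧ ∀ t, Good G Set.univ k {x | x ∈ P ∧ f x < t} := by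
    intro P hP
    induction hP with
    | empty h0 => exact ⟨fun _ => 0, 0, by simp, by simp, fun t => by simpa using h0⟩
    | insert P v _ _ hvP hg ih =>
      obtain ⟨f, N, hinj, hlt, hgood⟩ := ih
      have hv : Function.update f v N v = N := by simp
      have hx : ∀ x ∈ P, Function.update f v N x = f x := fun x hx =>
        Function.update_of_ne (fun h : x = v => hvP (h ▸ hx)) _ _
      have hlt' : ∀ x ∈ insert v P, Function.update f v N x < N + 1 := by
        rintro x (rfl | h)
        · rw [hv]; omega
        · rw [hx x h]; have := hlt x h; omega
      refine ⟨Function.update f v N, N + 1, ?_, hlt', fun t => ?_⟩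
      · rintro x (rfl | h1) y (rfl | h2) hxy
        · rfl
        · rw [hv, hx y h2] at hxy; have := hlt y h2; omega
        · rw [hv, hx x h1] at hxy; have := hlt x h1; omega
        · rw [hx x h1, hx y h2] at hxy; exact hinj h1 h2 hxy
      · by_cases ht : t ≤ N
        · convert hgood t using 1
          ext x
          simp only [Set.mem_ofPred_eq, Set.mem_insert_iff]
          constructor
          · rintro ⟨rfl | h, h'⟩
            · rw [hv] at h'; omega
            · exact ⟨h, by rwa [hx x h] at h'⟩
          · rintro ⟨h, h'⟩
            exact ⟨Or.inr h, by rwa [hx x h]⟩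
        · convert hg using 1
          ext x
          refine ⟨fun h => h.1, fun h => ⟨h, ?_⟩⟩
          have := hlt' x h
          omega
  obtain ⟨f, N, hinj, -, hgood⟩ := key _ h
  exact ⟨f, Set.injOn_univ.1 hinj, fun t => by simpa using hgood t⟩

theorem ForcesWidth.not_nwLE {G : SimpleGraph V} {k : ℕ} (h : ForcesWidth G (k + 1)) :
    ¬ NwLE G Set.univ k := by
  intro hn
  obtain ⟨f, hf, hgood⟩ := hn.exists_numbering
  obtain ⟨t, X, h1, -, h3⟩ := h f hf
  obtain ⟨c, hc1, hc2⟩ := hgood t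
  obtain ⟨i, j, hij, hcij⟩ := Fintype.exists_ne_map_eq_of_card_lt
    (fun i : Fin (k + 1) => (⟨c (X i), hc1 _ (h1 i)⟩ : Fin k)) (by simp)
  obtain ⟨z, hz, hz'⟩ := h3 i j hij
  exact hz' (hc2 _ (h1 i) _ (h1 j) (by simpa using hcij) z trivial
    (by simp only [Set.mem_ofPred_eq]; omega))

theorem ForcesWidth.iso {G : SimpleGraph V} {H : SimpleGraph W} {k : ℕ} (h : ForcesWidth G k)
    (i : G ≃g H) : ForcesWidth H k := by
  intro f hf
  obtain ⟨t, X, h1, h2, h3⟩ := h (f ∘ i) (hf.comp i.injective)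
  refine ⟨t, i ∘ X, h1, fun j => ?_, fun j j' hj => ?_⟩
  · obtain ⟨z, hz, hz'⟩ := h2 j
    exact ⟨i z, hz, i.map_adj_iff.2 hz'⟩
  · obtain ⟨z, hz, hz'⟩ := h3 j j' hj
    exact ⟨i z, hz, by simpa [i.map_adj_iff] using hz'⟩

/-- Consider three disjoint copies of a graph, together with a dominating vertex `v`, and cut the order
at the critical cut `t₂` of the middle copy.  If `v` lies on the left, it is adjacent to a vertex of
the third copy on the right, unlike the critical vertices of the second copy.  If `v` lies on the
right, a vertex of the first copy on the left sees `v` but nothing of the second copy. -/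
theorem forcesWidth_core {G : SimpleGraph V} {H : SimpleGraph W} {k : ℕ} {e₁ e₂ e₃ : V → W}
    (h₂ : ∀ x y, H.Adj (e₂ x) (e₂ y) ↔ G.Adj x y)
    (h₁₂ : ∀ x y, ¬ H.Adj (e₁ x) (e₂ y)) (h₂₃ : ∀ x y, ¬ H.Adj (e₂ x) (e₃ y)) {v : W}
    (hv₁ : ∀ x, H.Adj v (e₁ x)) (hv₃ : ∀ x, H.Adj v (e₃ x))
    {f : W → ℕ} {t₁ t₂ t₃ : ℕ} (ht₁ : t₁ ≤ t₂) (ht₃ : t₂ ≤ t₃)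
    (hx₁ : ∃ x, f (e₁ x) < t₁) (hx₃ : ∃ x, t₃ ≤ f (e₃ x)) {X : Fin k → V}
    (hX₁ : ∀ i, f (e₂ (X i)) < t₂) (hX₂ : ∀ i, ∃ z, t₂ ≤ f (e₂ z) ∧ G.Adj (X i) z)
    (hX₃ : ∀ i j, i ≠ j → ∃ z, t₂ ≤ f (e₂ z) ∧ ¬ (G.Adj (X i) z ↔ G.Adj (X j) z)) :
    ∃ t, ∃ Y : Fin (k + 1) → W, (∀ i, f (Y i) < t) ∧ (∀ i, ∃ z, t ≤ f z ∧ H.Adj (Y i) z) ∧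
      ∀ i j, i ≠ j → ∃ z, t ≤ f z ∧ ¬ (H.Adj (Y i) z ↔ H.Adj (Y j) z) := by
  obtain ⟨a, ha⟩ := hx₁
  obtain ⟨b, hb⟩ := hx₃
  -- It suffices to find one further vertex `y` with a new nonempty neighbourhood.
  obtain ⟨y, hy1, hy2, hy3⟩ : ∃ y, f y < t₂ ∧ (∃ z, t₂ ≤ f z ∧ H.Adj y z) ∧
      ∀ i, ∃ z, t₂ ≤ f z ∧ ¬ (H.Adj y z ↔ H.Adj (e₂ (X i)) z) := by
    by_cases hv : f v < t₂
    · exact ⟨v, hv, ⟨e₃ b, by omega, hv₃ b⟩,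
        fun i => ⟨e₃ b, by omega, by simp [hv₃ b, h₂₃]⟩⟩
    · refine ⟨e₁ a, by omega, ⟨v, by omega, (hv₁ a).symm⟩, fun i => ?_⟩
      obtain ⟨z, hz, hz'⟩ := hX₂ i
      exact ⟨e₂ z, hz, by simp [h₁₂, h₂, hz']⟩
  refine ⟨t₂, Fin.cons y (e₂ ∘ X), ?_, ?_, ?_⟩
  · intro i
    refine Fin.cases ?_ (fun i => ?_) i
    · simpa using hy1
    · simpa using hX₁ i
  · intro i
    refine Fin.cases ?_ (fun i => ?_) i
    · simpa using hy2
    · obtain ⟨z, hz, hz'⟩ := hX₂ i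
      exact ⟨e₂ z, hz, by simpa [h₂] using hz'⟩
  · intro i j
    refine Fin.cases ?_ (fun i => ?_) i <;> refine Fin.cases ?_ (fun j => ?_) j
    · exact fun h => absurd rfl h
    · intro _
      simpa using hy3 j
    · intro _
      obtain ⟨z, hz, hz'⟩ := hy3 i
      exact ⟨z, hz, by simpa [iff_comm] using hz'⟩
    · intro hij
      obtain ⟨z, hz, hz'⟩ := hX₃ i j (fun h => hij (by rw [h]))
      exact ⟨e₂ z, hz, by simpa [h₂] using hz'⟩

theorem ForcesWidth.triple {G : SimpleGraph V} {k : ℕ} (h : ForcesWidth G (k + 1)) :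
    ForcesWidth (GJoin (⊥ : SimpleGraph (Fin 1)) ((G ⊕g G) ⊕g G)) (k + 2) := by
  intro f hf
  let v : Fin 1 ⊕ ((V ⊕ V) ⊕ V) := Sum.inl 0
  let e₁ : V → Fin 1 ⊕ ((V ⊕ V) ⊕ V) := fun x => Sum.inr (Sum.inl (Sum.inl x))
  let e₂ : V → Fin 1 ⊕ ((V ⊕ V) ⊕ V) := fun x => Sum.inr (Sum.inl (Sum.inr x))
  let e₃ : V → Fin 1 ⊕ ((V ⊕ V) ⊕ V) := fun x => Sum.inr (Sum.inr x)
  set H := GJoin (⊥ : SimpleGraph (Fin 1)) ((G ⊕g G) ⊕g G) with hH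
  have a₁ : ∀ x y, H.Adj (e₁ x) (e₁ y) ↔ G.Adj x y := fun x y => by simp [hH, e₁, gJoin_adj_inr]
  have a₂ : ∀ x y, H.Adj (e₂ x) (e₂ y) ↔ G.Adj x y := fun x y => by simp [hH, e₂, gJoin_adj_inr]
  have a₃ : ∀ x y, H.Adj (e₃ x) (e₃ y) ↔ G.Adj x y := fun x y => by simp [hH, e₃, gJoin_adj_inr]
  have a₁₂ : ∀ x y, ¬ H.Adj (e₁ x) (e₂ y) := fun x y => by simp [hH, e₁, e₂, gJoin_adj_inr]
  have a₁₃ : ∀ x y, ¬ H.Adj (e₁ x) (e₃ y) := fun x y => by simp [hH, e₁, e₃, gJoin_adj_inr]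
  have a₂₃ : ∀ x y, ¬ H.Adj (e₂ x) (e₃ y) := fun x y => by simp [hH, e₂, e₃, gJoin_adj_inr]
  have a₂₁ : ∀ x y, ¬ H.Adj (e₂ x) (e₁ y) := fun x y h => a₁₂ y x h.symm
  have a₃₁ : ∀ x y, ¬ H.Adj (e₃ x) (e₁ y) := fun x y h => a₁₃ y x h.symm
  have a₃₂ : ∀ x y, ¬ H.Adj (e₃ x) (e₂ y) := fun x y h => a₂₃ y x h.symm
  have v₁ : ∀ x, H.Adj v (e₁ x) := fun x => gJoin_adj_inl_inr _ _ _ _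
  have v₂ : ∀ x, H.Adj v (e₂ x) := fun x => gJoin_adj_inl_inr _ _ _ _
  have v₃ : ∀ x, H.Adj v (e₃ x) := fun x => gJoin_adj_inl_inr _ _ _ _
  have i₁ : Function.Injective e₁ := fun x y h => by simpa [e₁] using h
  have i₂ : Function.Injective e₂ := fun x y h => by simpa [e₂] using h
  have i₃ : Function.Injective e₃ := fun x y h => by simpa [e₃] using h
  obtain ⟨t₁, X₁, p₁, q₁, r₁⟩ := h (f ∘ e₁) (hf.comp i₁)
  obtain ⟨t₂, X₂, p₂, q₂, r₂⟩ := h (f ∘ e₂) (hf.comp i₂)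
  obtain ⟨t₃, X₃, p₃, q₃, r₃⟩ := h (f ∘ e₃) (hf.comp i₃)
  have l₁ : ∃ x, f (e₁ x) < t₁ := ⟨_, p₁ 0⟩
  have l₂ : ∃ x, f (e₂ x) < t₂ := ⟨_, p₂ 0⟩
  have l₃ : ∃ x, f (e₃ x) < t₃ := ⟨_, p₃ 0⟩
  have u₁ : ∃ x, t₁ ≤ f (e₁ x) := ⟨_, (q₁ 0).choose_spec.1⟩
  have u₂ : ∃ x, t₂ ≤ f (e₂ x) := ⟨_, (q₂ 0).choose_spec.1⟩
  have u₃ : ∃ x, t₃ ≤ f (e₃ x) := ⟨_, (q₃ 0).choose_spec.1⟩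
  rcases le_total t₁ t₂ with h12 | h12 <;> rcases le_total t₂ t₃ with h23 | h23 <;>
    rcases le_total t₁ t₃ with h13 | h13
  · exact forcesWidth_core a₂ a₁₂ a₂₃ v₁ v₃ h12 h23 l₁ u₃ p₂ q₂ r₂
  · exact forcesWidth_core a₂ a₁₂ a₂₃ v₁ v₃ h12 h23 l₁ u₃ p₂ q₂ r₂
  · exact forcesWidth_core a₃ a₁₃ a₃₂ v₁ v₂ h13 h23 l₁ u₂ p₃ q₃ r₃
  · exact forcesWidth_core a₁ a₃₁ a₁₂ v₃ v₂ h13 h12 l₃ u₂ p₁ q₁ r₁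
  · exact forcesWidth_core a₁ a₂₁ a₁₃ v₂ v₃ h12 h13 l₂ u₃ p₁ q₁ r₁
  · exact forcesWidth_core a₃ a₂₃ a₃₁ v₂ v₁ h23 h13 l₂ u₁ p₃ q₃ r₃
  · exact forcesWidth_core a₂ a₃₂ a₂₁ v₃ v₁ h23 h12 l₃ u₁ p₂ q₂ r₂
  · exact forcesWidth_core a₂ a₃₂ a₂₁ v₃ v₁ h23 h12 l₃ u₁ p₂ q₂ r₂

/-- Quasi-threshold graphs have unbounded neighbourhood-width. -/
theorem exists_isQT_forcesWidth (k : ℕ) :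
    ∃ (n : ℕ) (G : SimpleGraph (Fin n)), IsQT G ∧ ForcesWidth G (k + 1) := by
  have key : ∃ (V : Type) (_ : Finite V) (G : SimpleGraph V), IsQT G ∧ ForcesWidth G (k + 1) := by
    induction k with
    | zero =>
      refine ⟨Fin 1 ⊕ Fin 1, inferInstance, _, .joinK1 .single, fun f hf => ?_⟩
      have hadj : (GJoin (⊥ : SimpleGraph (Fin 1)) (⊥ : SimpleGraph (Fin 1))).Adj
        (Sum.inl 0) (Sum.inr 0) := gJoin_adj_inl_inr _ _ _ _
      rcases lt_or_gt_of_ne (hf.ne hadj.ne) with h | h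
      · exact ⟨f (Sum.inr 0), fun _ => Sum.inl 0, fun _ => h, fun _ => ⟨_, le_rfl, hadj⟩,
          fun i j hij => absurd (Subsingleton.elim (α := Fin 1) i j) hij⟩
      · exact ⟨f (Sum.inl 0), fun _ => Sum.inr 0, fun _ => h, fun _ => ⟨_, le_rfl, hadj.symm⟩,
          fun i j hij => absurd (Subsingleton.elim (α := Fin 1) i j) hij⟩
    | succ k ih =>
      obtain ⟨V, _, G, hG, hw⟩ := ih
      exact ⟨_, inferInstance, _, .joinK1 (.union (.union hG hG) hG), hw.triple⟩
  obtain ⟨V, _, G, hG, hw⟩ := key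
  let i : G ≃g G.map (Finite.equivFin V).toEmbedding := SimpleGraph.Iso.map (Finite.equivFin V) G
  exact ⟨_, _, hG.iso ⟨i⟩, hw.iso i⟩

end LowerBound

/-- A hereditary class of graphs has bounded linear clique-width if and
only if (i) its prime members have bounded linear clique-width, (ii) it does not contain
all quasi-threshold graphs, and (iii) it does not contain all co-quasi-threshold graphs. -/
theorem hereditary_bddLcw_iff (C : ∀ n : ℕ, Set (SimpleGraph (Fin n)))
    (hC : Hereditary C) :
    (∃ k : ℕ, ∀ n : ℕ, ∀ G ∈ C n, lcw G ≤ k) ↔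
      ((∃ k : ℕ, ∀ n : ℕ, ∀ G ∈ C n, IsPrime G → lcw G ≤ k) ∧
        ¬ (∀ (n : ℕ) (G : SimpleGraph (Fin n)), IsQT G → G ∈ C n) ∧
        ¬ (∀ (n : ℕ) (G : SimpleGraph (Fin n)), IsQT Gᶜ → G ∈ C n)) := by
  constructor
  · rintro ⟨k, hk⟩
    obtain ⟨n, G, hG, hw⟩ := exists_isQT_forcesWidth k
    refine ⟨⟨k, fun n G hG _ => hk n G hG⟩, fun hall => ?_, fun hall => ?_⟩
    · exact hw.not_nwLE (nwLE_of_lcw_le (hk n G (hall n G hG)))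
    · have : Gᶜ ∈ C n := hall n Gᶜ (by simpa using hG)
      exact hw.not_nwLE (nwLE_of_lcw_le (hk n Gᶜ this)).of_compl
  · rintro ⟨⟨p, hp⟩, h1, h2⟩
    push Not at h1 h2
    obtain ⟨m₁, Q₁, hQ₁, hn₁⟩ := h1
    obtain ⟨m₂, Q₂, hQ₂, hn₂⟩ := h2
    obtain ⟨a, ha⟩ := hQ₁.exists_embedding
    obtain ⟨b, hb⟩ := hQ₂.exists_embedding
    refine ⟨(p + 2) * (a + b) + 1, fun n G hG => lcw_le_of_nwLE ?_⟩
    refine nwLE_of_not_hasQ (fun T hT => nwLE_of_primeOn hC hp hG hT) a b _ (fun h => ?_)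
      (fun h => ?_)
    · obtain ⟨e, -⟩ := ha G _ h
      exact hn₁ (hC Q₁ G ⟨e⟩ hG)
    · obtain ⟨e, -⟩ := hb Gᶜ _ h
      refine hn₂ (hC Q₂ G ⟨⟨e.toEmbedding, fun {x y} => ?_⟩⟩ hG)
      -- An embedding of complements is an embedding of the graphs themselves.
      by_cases hxy : x = y
      · simp [hxy]
      · have hne : e x ≠ e y := fun h => hxy (e.injective h)
        have := e.map_adj_iff (v := x) (w := y)
        simp only [SimpleGraph.compl_adj, hxy, hne, ne_eq, not_false_eq_true, true_and] at this
        exact not_iff_not.1 this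
end

section
/- For every quasi-threshold graph G there exists t ≥ 1 such that G is isomorphic to an induced subgraph of the universal quasi-threshold graph Q_t. -/
/-!
Why the theorem is true: induct on the construction of `G`. If `G` embeds in `Q_t`, then `K₁ ∗ G`
embeds in `K₁ ∗ Q_t`, which is the first part of `Q_{t+1}`. If `G` embeds in `Q_s` and `H` in `Q_t`,
then, because `Q_t` embeds in `Q_{t+1}`, both embed in `Q_m` with `m = max s t`; hence `G ⊎ H` embeds
in `Q_m ⊎ Q_m`, which sits inside `Q_{m+1} = (K₁ ∗ Q_m) ⊎ Q_m`.
-/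

open scoped Classical

/-- The join is functorial for induced embeddings, since it is the complement of the disjoint
union of the complements. -/
def joinEmbedding {V W V' W' : Type} {G : SimpleGraph V} {H : SimpleGraph W}
    {G' : SimpleGraph V'} {H' : SimpleGraph W'} (f : G ↪g G') (g : H ↪g H') :
    GJoin G H ↪g GJoin G' H' :=
  SimpleGraph.Embedding.complEquiv (SimpleGraph.Embedding.sum
    (SimpleGraph.Embedding.complEquiv f) (SimpleGraph.Embedding.complEquiv g))

/-- The second part of a join is an induced subgraph of it. -/
def joinInr {V W : Type} (G : SimpleGraph V) (H : SimpleGraph W) : H ↪g GJoin G H where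
  toEmbedding := Function.Embedding.inr
  map_rel_iff' := by
    intro a b
    have h : H.Adj a b → a ≠ b := fun h => h.ne
    simp [GJoin]
    tauto

lemma qGraph_embeds_of_le {m n : ℕ} (h : m ≤ n) : Nonempty (QGraph m ↪g QGraph n) := by
  induction n, h using Nat.le_induction with
  | base => exact ⟨SimpleGraph.Embedding.refl⟩
  | succ n _ ih =>
    obtain ⟨f⟩ := ih
    exact ⟨(SimpleGraph.Embedding.sumInr (G := GJoin ⊥ (QGraph n)) (H := QGraph n)).comp f⟩

lemma isQT_embeds_in_qGraph {V : Type} {G : SimpleGraph V} (hG : IsQT G) :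
    ∃ n : ℕ, Nonempty (G ↪g QGraph n) := by
  induction hG with
  | single => exact ⟨0, ⟨SimpleGraph.Embedding.refl⟩⟩
  | joinK1 _ ih =>
    obtain ⟨n, ⟨f⟩⟩ := ih
    exact ⟨n + 1, ⟨(SimpleGraph.Embedding.sumInl (G := GJoin ⊥ (QGraph n)) (H := QGraph n)).comp
      (joinEmbedding SimpleGraph.Embedding.refl f)⟩⟩
  | union _ _ ihG ihH =>
    obtain ⟨m, ⟨f⟩⟩ := ihG
    obtain ⟨n, ⟨g⟩⟩ := ihH
    obtain ⟨i⟩ := qGraph_embeds_of_le (le_max_left m n)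
    obtain ⟨j⟩ := qGraph_embeds_of_le (le_max_right m n)
    exact ⟨max m n + 1, ⟨SimpleGraph.Embedding.sum
      ((joinInr ⊥ (QGraph (max m n))).comp (i.comp f)) (j.comp g)⟩⟩
  | iso _ e ih =>
    obtain ⟨n, ⟨f⟩⟩ := ih
    obtain ⟨e⟩ := e
    exact ⟨n, ⟨f.comp e.symm.toEmbedding⟩⟩

/-- Every quasi-threshold graph is an induced subgraph of some universal
quasi-threshold graph `Q_t` (here `QGraph (t - 1)` is `Q_t`). -/
theorem isQT_embeds_in_universal {V : Type} (G : SimpleGraph V) (hG : IsQT G) :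
    ∃ t : ℕ, 1 ≤ t ∧ Nonempty (G ↪g QGraph (t - 1)) := by
  obtain ⟨n, hn⟩ := isQT_embeds_in_qGraph hG
  -- `QGraph n` is `Q_{n+1}`.
  exact ⟨n + 1, Nat.le_add_left 1 n, hn⟩
end

section
/- For every finite graph G on two or more vertices, there exist a prime graph H on two or more vertices and nonempty graphs G_v (v ∈ V(H)) such that G = H[G_v : v ∈ V(H)]; the graph H is unique up to isomorphism, and moreover if H has at least four vertices then the decomposition is unique, i.e., the family of graphs G_v is determined by G up to the isomorphism of the skeleton. -/
/-!
Existence: a graph that is not prime has a nontrivial module; collapsing it to a point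
(`exists_collapse`) exhibits the graph as an inflation of a smaller graph on at least two
vertices, and inflations compose, so strong induction on the number of vertices ends at a prime
skeleton (`exists_prime_inflation`).

Uniqueness: fibers of an inflation map are modules, and the image of a module under an inflation
map is a module of the skeleton. Let `φ₁`, `φ₂` be inflation maps onto prime skeletons. By
primality, each fiber of `φ₂` lies inside one fiber of `φ₁` or meets all of them. If all fibers
of `φ₂` are of the first kind, the two partitions coincide and the skeletons are compatibly
isomorphic (`iso_of_fibers_refine`). Otherwise `H₁` has just two vertices (`iso_or_card_eq_two`),
which is impossible when it has at least four. Exchanging the roles of `φ₁` and `φ₂`, it remains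
to treat two skeletons on two vertices each; there is then a pair of vertices of `G` separated by
both maps, whose adjacency in `G` decides whether each skeleton is an edge or a non-edge.
-/

open scoped Classical

/-- Inflations compose. -/
lemma IsInflation.comp {V ι κ : Type} {G : SimpleGraph V} {H : SimpleGraph ι}
    {K : SimpleGraph κ} {φ : V → ι} {ψ : ι → κ}
    (h₁ : IsInflation G H φ) (h₂ : IsInflation H K ψ) : IsInflation G K (ψ ∘ φ) := by
  refine ⟨h₂.1.comp h₁.1, fun x y hxy => ?_⟩
  have hne : φ x ≠ φ y := fun h => hxy (by simp [h])
  exact (h₁.2 x y hne).trans (h₂.2 _ _ hxy)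

/-- A nontrivial module can be collapsed to one of its vertices, which exhibits `G` as an
inflation of a smaller graph still having at least two vertices. -/
lemma exists_collapse {V : Type} [Finite V] {G : SimpleGraph V} {M : Set V}
    (hM : IsModule G M) (hns : ¬ M.Subsingleton) (hnu : M ≠ Set.univ) :
    ∃ (ι : Type) (H : SimpleGraph ι) (φ : V → ι),
      2 ≤ Nat.card ι ∧ Nat.card ι < Nat.card V ∧ IsInflation G H φ := by
  obtain ⟨a, ha, b, hb, hab⟩ := Set.not_subsingleton_iff.mp hns
  obtain ⟨w, hw⟩ := (Set.ne_univ_iff_exists_notMem M).mp hnu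
  refine ⟨{v : V // v ∉ M ∨ v = a}, G.comap Subtype.val,
    fun v => if h : v ∈ M then ⟨a, Or.inr rfl⟩ else ⟨v, Or.inl h⟩, ?_, ?_, ?_, ?_⟩
  · have : Nontrivial {v : V // v ∉ M ∨ v = a} :=
      ⟨⟨w, Or.inl hw⟩, ⟨a, Or.inr rfl⟩, fun h => hw (by
        have := congrArg Subtype.val h
        simp only at this
        exact this ▸ ha)⟩
    exact Finite.one_lt_card
  · apply Finite.card_subtype_lt (x := b)
    rintro (h | h)
    · exact h hb
    · exact hab h.symm
  · rintro ⟨v, hv⟩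
    refine ⟨v, ?_⟩
    by_cases h : v ∈ M
    · have : v = a := hv.resolve_left (fun h' => h' h)
      simp [this]
    · simp [h]
  · intro x y hxy
    by_cases hx : x ∈ M <;> by_cases hy : y ∈ M
    · simp [hx, hy] at hxy
    · simp only [hx, hy, dite_true, dite_false, SimpleGraph.comap_adj]
      rw [G.adj_comm x y, G.adj_comm a y]
      exact hM x hx a ha y hy
    · simp only [hx, hy, dite_true, dite_false, SimpleGraph.comap_adj]
      exact hM y hy a ha x hx
    · simp [hx, hy]

lemma exists_prime_inflation (n : ℕ) : ∀ {V : Type} [Finite V] (G : SimpleGraph V),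
    Nat.card V = n → 2 ≤ n →
    ∃ (ι : Type) (H : SimpleGraph ι) (φ : V → ι), IsPrime H ∧ IsInflation G H φ := by
  induction n using Nat.strong_induction_on with
  | _ n ih =>
    intro V _ G hn h2
    by_cases hP : IsPrime G
    · exact ⟨V, G, id, hP, Function.surjective_id, fun _ _ _ => Iff.rfl⟩
    · obtain ⟨M, hM, hns, hnu⟩ : ∃ M, IsModule G M ∧ ¬ M.Subsingleton ∧ M ≠ Set.univ := by
        by_contra! hcon
        exact hP ⟨hn ▸ h2, fun M hM => or_iff_not_imp_left.mpr fun hs =>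
          hcon M hM (Set.not_subsingleton_iff.mp hs)⟩
      obtain ⟨κ, K, ψ, hκ, hlt, hψ⟩ := exists_collapse hM hns hnu
      have : Finite κ := Finite.of_surjective ψ hψ.1
      obtain ⟨ι, H, φ, hH, hφ⟩ := ih _ (hn ▸ hlt) K rfl hκ
      exact ⟨ι, H, φ ∘ ψ, hH, hψ.comp hφ⟩

lemma IsInflation.fiber_isModule {V ι : Type} {G : SimpleGraph V} {H : SimpleGraph ι}
    {φ : V → ι} (h : IsInflation G H φ) (i : ι) : IsModule G (φ ⁻¹' {i}) := by
  rintro u rfl v hv w hw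
  have hv : φ v = φ u := hv
  have hw : φ w ≠ φ u := hw
  rw [h.2 w u hw, h.2 w v (hv ▸ hw), hv]

lemma IsInflation.image_isModule {V ι : Type} {G : SimpleGraph V} {H : SimpleGraph ι}
    {φ : V → ι} (h : IsInflation G H φ) {M : Set V} (hM : IsModule G M) :
    IsModule H (φ '' M) := by
  rintro _ ⟨x, hx, rfl⟩ _ ⟨y, hy, rfl⟩ w hw
  obtain ⟨z, rfl⟩ := h.1 w
  have hne : ∀ t ∈ M, φ z ≠ φ t := fun t ht he => hw ⟨t, ht, he.symm⟩
  rw [← h.2 z x (hne x hx), ← h.2 z y (hne y hy)]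
  exact hM x hx y hy z fun hz => hw ⟨z, hz, rfl⟩

/-- If `φ₁` is constant on every fiber of `φ₂`, it factors as `g ∘ φ₂`. The fibers of `g` are
modules of the prime graph `H₂`, hence singletons, so `g` is an isomorphism. -/
lemma iso_of_fibers_refine {V ι₁ ι₂ : Type} {G : SimpleGraph V} {H₁ : SimpleGraph ι₁}
    {H₂ : SimpleGraph ι₂} {φ₁ : V → ι₁} {φ₂ : V → ι₂}
    (p₁ : IsPrime H₁) (h₁ : IsInflation G H₁ φ₁) (p₂ : IsPrime H₂) (h₂ : IsInflation G H₂ φ₂)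
    (href : ∀ x y, φ₂ x = φ₂ y → φ₁ x = φ₁ y) :
    ∃ e : H₁ ≃g H₂, ∀ x, φ₂ x = e (φ₁ x) := by
  have hinj : ∀ x y, φ₁ x = φ₁ y → φ₂ x = φ₂ y := by
    intro x y hxy
    rcases p₂.2 _ (h₂.image_isModule (h₁.fiber_isModule (φ₁ x))) with hs | hu
    · exact hs ⟨x, rfl, rfl⟩ ⟨y, hxy.symm, rfl⟩
    · exfalso
      -- the fiber of `φ₁` through `x` meets all fibers of `φ₂`, so `φ₁` is constant
      have hc : ∀ z, φ₁ z = φ₁ x := by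
        intro z
        obtain ⟨t, ht, htz⟩ : φ₂ z ∈ φ₂ '' (φ₁ ⁻¹' {φ₁ x}) := hu ▸ Set.mem_univ _
        exact (href z t htz.symm).trans ht
      have : Subsingleton ι₁ := ⟨fun i j => by
        obtain ⟨a, rfl⟩ := h₁.1 i
        obtain ⟨b, rfl⟩ := h₁.1 j
        rw [hc a, hc b]⟩
      have := Finite.card_le_one_iff_subsingleton (α := ι₁) |>.mpr this
      have := p₁.1
      omega
  let f : ι₁ → ι₂ := fun i => φ₂ (Function.surjInv h₁.1 i)
  have hf : ∀ x, f (φ₁ x) = φ₂ x := fun x => hinj _ _ (Function.surjInv_eq h₁.1 _)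
  have hbij : Function.Bijective f := by
    constructor
    · intro i j hij
      obtain ⟨a, rfl⟩ := h₁.1 i
      obtain ⟨b, rfl⟩ := h₁.1 j
      rw [hf, hf] at hij
      exact href _ _ hij
    · intro k
      obtain ⟨a, rfl⟩ := h₂.1 k
      exact ⟨φ₁ a, hf a⟩
  refine ⟨⟨Equiv.ofBijective f hbij, ?_⟩, fun x => (hf x).symm⟩
  intro i j
  obtain ⟨a, rfl⟩ := h₁.1 i
  obtain ⟨b, rfl⟩ := h₁.1 j
  simp only [Equiv.ofBijective_apply, hf]
  by_cases hab : φ₁ a = φ₁ b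
  · simp [hab, hinj _ _ hab]
  · rw [← h₁.2 a b hab, ← h₂.2 a b fun h => hab (href _ _ h)]

/-- Either the two decompositions agree, or some fiber of `φ₂` meets all fibers of `φ₁`. In the
latter case a vertex `x` outside that fiber sees the whole fiber uniformly, so in `H₁` the
complement of `φ₁ x` is a module, and primality leaves only two vertices in `H₁`. -/
lemma iso_or_card_eq_two {V ι₁ ι₂ : Type} {G : SimpleGraph V} {H₁ : SimpleGraph ι₁}
    {H₂ : SimpleGraph ι₂} {φ₁ : V → ι₁} {φ₂ : V → ι₂}
    (p₁ : IsPrime H₁) (h₁ : IsInflation G H₁ φ₁) (p₂ : IsPrime H₂) (h₂ : IsInflation G H₂ φ₂) :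
    (∃ e : H₁ ≃g H₂, ∀ x, φ₂ x = e (φ₁ x)) ∨
      (Nat.card ι₁ = 2 ∧ ∃ x y, φ₁ x ≠ φ₁ y ∧ φ₂ x ≠ φ₂ y) := by
  by_cases href : ∀ x y, φ₂ x = φ₂ y → φ₁ x = φ₁ y
  · exact Or.inl (iso_of_fibers_refine p₁ h₁ p₂ h₂ href)
  right
  push Not at href
  obtain ⟨a, b, hab, hne⟩ := href
  have hF := h₂.fiber_isModule (φ₂ a)
  have hmeet : ∀ i, ∃ y, φ₂ y = φ₂ a ∧ φ₁ y = i := by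
    rcases p₁.2 _ (h₁.image_isModule hF) with hs | hu
    · exact absurd (hs ⟨a, rfl, rfl⟩ ⟨b, hab.symm, rfl⟩) hne
    · intro i
      have hi : i ∈ φ₁ '' (φ₂ ⁻¹' {φ₂ a}) := hu ▸ Set.mem_univ i
      exact hi
  have : Nat.card ι₂ ≠ 0 := by have := p₂.1; omega
  have : Finite ι₂ := (Nat.card_ne_zero.mp this).2
  have : Nontrivial ι₂ := Finite.one_lt_card_iff_nontrivial.mp p₂.1
  have : Nat.card ι₁ ≠ 0 := by have := p₁.1; omega
  have : Finite ι₁ := (Nat.card_ne_zero.mp this).2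
  have : Nontrivial ι₁ := Finite.one_lt_card_iff_nontrivial.mp p₁.1
  obtain ⟨k, hk⟩ := exists_ne (φ₂ a)
  obtain ⟨x, rfl⟩ := h₂.1 k
  obtain ⟨j, hj⟩ := exists_ne (φ₁ x)
  obtain ⟨y, hy, rfl⟩ := hmeet j
  refine ⟨?_, x, y, hj.symm, fun h => hk (h.trans hy)⟩
  have hmod : IsModule H₁ {φ₁ x}ᶜ := by
    intro u hu v hv w hw
    obtain rfl : w = φ₁ x := by simpa using hw
    obtain ⟨s, hs, rfl⟩ := hmeet u
    obtain ⟨t, ht, rfl⟩ := hmeet v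
    rw [← h₁.2 x s (Ne.symm hu), ← h₁.2 x t (Ne.symm hv)]
    exact hF s hs t ht x hk
  have hsub : ({φ₁ x}ᶜ : Set ι₁).Subsingleton := by
    rcases p₁.2 _ hmod with hs | hu
    · exact hs
    · exact absurd (hu ▸ Set.mem_univ (φ₁ x) : φ₁ x ∈ ({φ₁ x}ᶜ : Set ι₁)) (by simp)
  rw [Nat.card_eq_two_iff]
  refine ⟨φ₁ x, φ₁ y, hj.symm, Set.eq_univ_of_forall fun i => ?_⟩
  by_cases hi : i = φ₁ x
  · exact Or.inl hi
  · exact Or.inr (hsub hi hj)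

lemma iso_of_card_eq_two {ι₁ ι₂ : Type} {H₁ : SimpleGraph ι₁} {H₂ : SimpleGraph ι₂}
    (c₁ : Nat.card ι₁ = 2) (c₂ : Nat.card ι₂ = 2) {a b : ι₁} {c d : ι₂}
    (hab : a ≠ b) (hcd : c ≠ d) (hadj : H₁.Adj a b ↔ H₂.Adj c d) : Nonempty (H₁ ≃g H₂) := by
  have key : ∀ {κ : Type}, Nat.card κ = 2 → ∀ {p q : κ}, p ≠ q → ∀ i, i ≠ p → i = q := by
    intro κ hκ p q hpq i hi
    have hp := (Nat.card_eq_two_iff' p).mp hκ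
    exact hp.unique hi hpq.symm
  let f : ι₁ → ι₂ := fun i => if i = a then c else d
  have fa : f a = c := by simp [f]
  have fb : f b = d := by simp [f, hab.symm]
  have hι : ∀ i, i = a ∨ i = b := fun i => or_iff_not_imp_left.mpr (key c₁ hab i)
  have hbij : Function.Bijective f := by
    constructor
    · intro i j hij
      rcases hι i with rfl | rfl <;> rcases hι j with rfl | rfl <;> simp_all
    · intro k
      by_cases hk : k = c
      · exact ⟨a, fa.trans hk.symm⟩
      · exact ⟨b, fb.trans (key c₂ hcd k hk).symm⟩
  refine ⟨⟨Equiv.ofBijective f hbij, ?_⟩⟩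
  intro i j
  simp only [Equiv.ofBijective_apply]
  rcases hι i with rfl | rfl <;> rcases hι j with rfl | rfl
  · simp
  · rw [fa, fb, hadj]
  · rw [fa, fb, H₁.adj_comm, H₂.adj_comm, hadj]
  · simp

/-- modular decomposition. Every finite graph `G` on at least two
vertices is an inflation of a prime graph `H` on at least two vertices by nonempty graphs;
the skeleton `H` is unique up to isomorphism, and if it has at least four vertices, then
the decomposition itself is unique: the isomorphism of skeletons can be chosen to
identify the two module maps, so the family of modules is determined by `G`. -/
theorem modular_decomposition {V : Type} [Finite V] (G : SimpleGraph V)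
    (hV : 2 ≤ Nat.card V) :
    (∃ (ι : Type) (H : SimpleGraph ι) (φ : V → ι), IsPrime H ∧ IsInflation G H φ) ∧
    (∀ (ι₁ ι₂ : Type) (H₁ : SimpleGraph ι₁) (H₂ : SimpleGraph ι₂)
        (φ₁ : V → ι₁) (φ₂ : V → ι₂),
      IsPrime H₁ → IsInflation G H₁ φ₁ → IsPrime H₂ → IsInflation G H₂ φ₂ →
        Nonempty (H₁ ≃g H₂) ∧
        (4 ≤ Nat.card ι₁ → ∃ e : H₁ ≃g H₂, ∀ x : V, φ₂ x = e (φ₁ x))) := by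
  refine ⟨exists_prime_inflation _ G rfl hV, ?_⟩
  intro ι₁ ι₂ H₁ H₂ φ₁ φ₂ p₁ h₁ p₂ h₂
  rcases iso_or_card_eq_two p₁ h₁ p₂ h₂ with ⟨e, he⟩ | ⟨c₁, x, y, hx₁, hx₂⟩
  · exact ⟨⟨e⟩, fun _ => ⟨e, he⟩⟩
  · refine ⟨?_, fun h4 => by omega⟩
    rcases iso_or_card_eq_two p₂ h₂ p₁ h₁ with ⟨e, -⟩ | ⟨c₂, -⟩
    · exact ⟨e.symm⟩
    · exact iso_of_card_eq_two c₁ c₂ hx₁ hx₂ ((h₁.2 x y hx₁).symm.trans (h₂.2 x y hx₂))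
end

section
/- If G = H[G_v : v ∈ V(H)] is an inflation of a graph H by nonempty graphs G_v, then lcw(G) ≤ lcw(H) + max over v ∈ V(H) of lcw(G_v). -/
/-!
Fix an expression for `H` with `lcw H` labels, and reserve `m = max_v lcw (G_v)` further labels.
The expression for `H` is turned into one for `G` as follows: whenever a vertex `v` of `H` is
introduced with label `c`, the graph `G_v` is built using only the reserved labels
(`exists_simulation`), after which every reserved label is relabeled to `c`
(`exists_merge_labels`); joins and relabelings of `H` are carried out unchanged. At each moment
between two operations of `H` the vertices of a fiber all carry the label of their image in `H`,
and no vertex carries a reserved label, so the joins create exactly the edges between distinct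
fibers prescribed by `H` (`exists_inflated`).

Since `lcw` is an infimum in `ℕ`, which would be `0` for an empty set, one also needs that each
finite graph has some expression: give all vertices distinct labels and join one edge at a time
(`lcwLE_card`).
-/


open scoped Classical

/-! ### Existence of expressions for finite graphs -/

/-- A finite graph is constructed by giving all vertices distinct labels and joining the two
labels of each edge. -/
lemma lcwLE_card {V : Type} [Finite V] (G : SimpleGraph V) : lcwLE G (Nat.card V) := by
  have e := Finite.equivFin V
  have := Fintype.ofFinite V
  have hverts : ∀ S : Finset V, Relation.ReflTransGen LCWStep
      (⟨∅, fun _ _ => False, e⟩ : LCWConfig V (Nat.card V))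
      ⟨(S : Set V), fun _ _ => False, e⟩ := by
    intro S
    induction S using Finset.induction_on with
    | empty => simpa using Relation.ReflTransGen.refl
    | insert v S hv ih =>
      refine ih.tail ?_
      have hlab : (e : V → Fin (Nat.card V)) = fun x => if x = v then e v else e x := by
        funext x
        split_ifs with hx
        · rw [hx]
        · rfl
      have hstep := LCWStep.intro
        (⟨(S : Set V), fun _ _ => False, e⟩ : LCWConfig V (Nat.card V)) v (by simpa using hv) (e v)
      simp only [← hlab] at hstep
      simpa using hstep
  have hedges : ∀ P : Finset (V × V), (∀ p ∈ P, G.Adj p.1 p.2) → Relation.ReflTransGen LCWStep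
      (⟨∅, fun _ _ => False, e⟩ : LCWConfig V (Nat.card V))
      ⟨Set.univ, fun x y => (x, y) ∈ P ∨ (y, x) ∈ P, e⟩ := by
    intro P
    induction P using Finset.induction_on with
    | empty => intro _; simpa using hverts Finset.univ
    | insert p P hp ih =>
      intro hP
      refine (ih fun q hq => hP q (Finset.mem_insert_of_mem hq)).tail ?_
      have hne : e p.1 ≠ e p.2 := fun h =>
        (hP p (Finset.mem_insert_self _ _)).ne (e.injective h)
      convert LCWStep.join _ _ _ hne using 2
      funext x y
      obtain ⟨a, b⟩ := p
      simp only [Finset.mem_insert, Prod.mk.injEq, Set.mem_univ, true_and,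
        EmbeddingLike.apply_eq_iff_eq, eq_iff_iff]
      tauto
  refine ⟨e, e, ?_⟩
  convert hedges (Finset.univ.filter fun p => G.Adj p.1 p.2) (by simp) using 2
  funext x y
  simp [G.adj_comm y x]

lemma lcwLE_lcw {V : Type} [Finite V] (G : SimpleGraph V) : lcwLE G (lcw G) :=
  Nat.sInf_mem (s := {k | lcwLE G k}) ⟨_, lcwLE_card G⟩

/-! ### Carrying out an expression inside a larger configuration -/

/-- An expression for vertices in `W` with labels in `Fin a` can be carried out, along injections
`e` and `f` of the vertices and labels, on top of a configuration `D` which has used no vertex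
in the range of `e` and in which no label in the range of `f` is present. -/
lemma exists_simulation {W V : Type} {a b : ℕ} (e : W → V) (he : Function.Injective e)
    (f : Fin a → Fin b) (hf : Function.Injective f) (D : LCWConfig V b)
    (hD : ∀ w, e w ∉ D.verts) (hlab : ∀ y ∈ D.verts, ∀ i, D.lab y ≠ f i)
    (ℓ₀ : W → Fin a) (C : LCWConfig W a)
    (hC : Relation.ReflTransGen LCWStep (⟨∅, fun _ _ => False, ℓ₀⟩ : LCWConfig W a) C) :
    ∃ D' : LCWConfig V b, Relation.ReflTransGen LCWStep D D' ∧
      D'.verts = D.verts ∪ e '' C.verts ∧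
      (∀ x y, D'.adj x y ↔ D.adj x y ∨ ∃ u w, e u = x ∧ e w = y ∧ C.adj u w) ∧
      (∀ y ∈ D.verts, D'.lab y = D.lab y) ∧
      (∀ w ∈ C.verts, D'.lab (e w) = f (C.lab w)) := by
  induction hC with
  | refl => exact ⟨D, .refl, by simp⟩
  | @tail C _ _ hstep ih =>
    obtain ⟨D', hreach, hv, hadj, hold, hnew⟩ := ih
    cases hstep with
    | intro v hvC c =>
      have hev : e v ∉ D'.verts := by
        rw [hv]
        rintro (h | ⟨w, hw, hwv⟩)
        · exact hD v h
        · exact hvC (he hwv ▸ hw)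
      refine ⟨_, hreach.tail (.intro D' (e v) hev (f c)), ?_, hadj, ?_, ?_⟩
      · simp [hv, Set.image_insert_eq, Set.union_insert]
      · intro y hy
        have : y ≠ e v := fun h => hD v (h ▸ hy)
        simp [this, hold y hy]
      · rintro w hw
        by_cases hwv : w = v
        · simp [hwv]
        · have : w ∈ C.verts := by simpa [hwv] using hw
          simp [hwv, he.eq_iff, hnew w this]
    | join i j hij =>
      refine ⟨_, hreach.tail (.join D' (f i) (f j) (hf.ne hij)), hv, ?_, hold, hnew⟩
      intro x y
      -- Only vertices coming from `W` carry a label in the range of `f`.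
      have key : ∀ x l, (x ∈ D'.verts ∧ D'.lab x = f l) ↔
          ∃ u ∈ C.verts, e u = x ∧ C.lab u = l := by
        intro x l
        constructor
        · rintro ⟨hx, hl⟩
          rw [hv] at hx
          rcases hx with hx | ⟨u, hu, rfl⟩
          · exact absurd (hold x hx ▸ hl) (hlab x hx l)
          · exact ⟨u, hu, rfl, hf (hnew u hu ▸ hl)⟩
        · rintro ⟨u, hu, rfl, rfl⟩
          exact ⟨hv ▸ Or.inr ⟨u, hu, rfl⟩, hnew u hu⟩
      have hxi := key x i
      have hxj := key x j
      have hyi := key y i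
      have hyj := key y j
      dsimp only
      rw [hadj]
      constructor
      · rintro ((h | ⟨u, w, hu, hw, h⟩) | ⟨hx, hy, ⟨h1, h2⟩ | ⟨h1, h2⟩⟩)
        · exact Or.inl h
        · exact Or.inr ⟨u, w, hu, hw, Or.inl h⟩
        · obtain ⟨u, hu, rfl, hul⟩ := hxi.1 ⟨hx, h1⟩
          obtain ⟨w, hw, rfl, hwl⟩ := hyj.1 ⟨hy, h2⟩
          exact Or.inr ⟨u, w, rfl, rfl, Or.inr ⟨hu, hw, Or.inl ⟨hul, hwl⟩⟩⟩
        · obtain ⟨u, hu, rfl, hul⟩ := hxj.1 ⟨hx, h1⟩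
          obtain ⟨w, hw, rfl, hwl⟩ := hyi.1 ⟨hy, h2⟩
          exact Or.inr ⟨u, w, rfl, rfl, Or.inr ⟨hu, hw, Or.inr ⟨hul, hwl⟩⟩⟩
      · rintro (h | ⟨u, w, hu, hw, h | ⟨hu', hw', ⟨h1, h2⟩ | ⟨h1, h2⟩⟩⟩)
        · exact Or.inl (Or.inl h)
        · exact Or.inl (Or.inr ⟨u, w, hu, hw, h⟩)
        · have h3 := hxi.2 ⟨u, hu', hu, h1⟩
          have h4 := hyj.2 ⟨w, hw', hw, h2⟩
          exact Or.inr ⟨h3.1, h4.1, Or.inl ⟨h3.2, h4.2⟩⟩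
        · have h3 := hxj.2 ⟨u, hu', hu, h1⟩
          have h4 := hyi.2 ⟨w, hw', hw, h2⟩
          exact Or.inr ⟨h3.1, h4.1, Or.inr ⟨h3.2, h4.2⟩⟩
    | relabel i j hij =>
      refine ⟨_, hreach.tail (.relabel D' (f i) (f j) (hf.ne hij)), hv, hadj, ?_, ?_⟩
      · intro y hy
        simp [hold y hy, hlab y hy i]
      · intro w hw
        simp only [hnew w hw, hf.eq_iff]
        split_ifs <;> rfl

/-- All labels in a set `S` can be merged into a label `c ∉ S`. -/
lemma exists_merge_labels {V : Type} {b : ℕ} (c : Fin b) (D : LCWConfig V b) (S : Finset (Fin b))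
    (hc : c ∉ S) :
    Relation.ReflTransGen LCWStep D
      ⟨D.verts, D.adj, fun x => if D.lab x ∈ S then c else D.lab x⟩ := by
  induction S using Finset.induction_on with
  | empty => simpa using Relation.ReflTransGen.refl
  | insert s S hs ih =>
    rw [Finset.mem_insert, not_or] at hc
    refine (ih hc.2).tail ?_
    convert LCWStep.relabel _ s c (Ne.symm hc.1) using 2
    funext x
    have := hc.1
    simp only [Finset.mem_insert]
    grind

/-! ### Inflations -/

/-- Each configuration `C` reached in an expression with `k` labels on the vertices of `H` inflates
to a reachable configuration on the vertices of `G` with `k + m` labels, in which the fibers over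
`C.verts` are complete and carry the labels of their images. -/
lemma exists_inflated {V ι : Type} {k m : ℕ} (G : SimpleGraph V) (φ : V → ι)
    (hm : ∀ v, ∃ n ≤ m, lcwLE (G.induce {x | φ x = v}) n)
    (ℓ₀ : ι → Fin k) (C : LCWConfig ι k)
    (hC : Relation.ReflTransGen LCWStep (⟨∅, fun _ _ => False, ℓ₀⟩ : LCWConfig ι k) C) :
    ∃ D : LCWConfig V (k + m), Relation.ReflTransGen LCWStep
        (⟨∅, fun _ _ => False, fun x => (ℓ₀ (φ x)).castAdd m⟩ : LCWConfig V (k + m)) D ∧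
      (∀ x, x ∈ D.verts ↔ φ x ∈ C.verts) ∧
      (∀ x y, D.adj x y ↔ C.adj (φ x) (φ y) ∨ (φ x = φ y ∧ φ x ∈ C.verts ∧ G.Adj x y)) ∧
      (∀ x, φ x ∈ C.verts → D.lab x = (C.lab (φ x)).castAdd m) := by
  have hinj : Function.Injective (Fin.castAdd m : Fin k → Fin (k + m)) :=
    Fin.castAdd_injective k m
  induction hC with
  | refl => exact ⟨_, .refl, by simp⟩
  | @tail C _ _ hstep ih =>
    obtain ⟨D, hreach, hv, hadj, hlab⟩ := ih
    cases hstep with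
    | intro v hvC c =>
      obtain ⟨n, hn, l₀, l, hl⟩ := hm v
      obtain ⟨D', hreach', hv', hadj', hold, hnew⟩ :=
        exists_simulation (fun x : {x | φ x = v} => (x : V)) Subtype.val_injective
          (fun i : Fin n => Fin.natAdd k (Fin.castLE hn i))
          (fun i j hij => by simpa [Fin.ext_iff] using hij) D
          (by rintro ⟨w, rfl⟩ hw; exact hvC ((hv w).1 hw))
          (by
            intro y hy i hi
            rw [hlab y ((hv y).1 hy), Fin.ext_iff] at hi
            have := (C.lab (φ y)).isLt
            simp only [Fin.val_castAdd, Fin.val_natAdd] at hi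
            omega) l₀ _ hl
      -- The reserved labels are those with value at least `k`.
      refine ⟨_, (hreach.trans hreach').trans (exists_merge_labels (c.castAdd m) D'
        (Finset.univ.filter fun i => k ≤ i.val) (by simp)), ?_, ?_, ?_⟩
      · intro x
        simp [hv', hv, or_comm]
      · intro x y
        simp only [hadj', hadj, Set.mem_insert_iff, SimpleGraph.comap_adj,
          Function.Embedding.subtype_apply]
        constructor
        · rintro ((h | ⟨h1, h2, h3⟩) | ⟨⟨u, hu⟩, ⟨w, hw⟩, rfl, rfl, h⟩)
          · exact Or.inl h
          · exact Or.inr ⟨h1, Or.inr h2, h3⟩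
          · exact Or.inr ⟨hu.trans hw.symm, Or.inl hu, h⟩
        · rintro (h | ⟨h1, h2 | h2, h3⟩)
          · exact Or.inl (Or.inl h)
          · exact Or.inr ⟨⟨x, h2⟩, ⟨y, h1.symm.trans h2⟩, rfl, rfl, h3⟩
          · exact Or.inl (Or.inr ⟨h1, h2, h3⟩)
      · intro x hx
        by_cases hxv : φ x = v
        · have := hnew ⟨x, hxv⟩ (Set.mem_univ _)
          simp only at this
          simp [this, hxv]
        · have hxC : φ x ∈ C.verts := by simpa [hxv] using hx
          have := hold x ((hv x).2 hxC)
          simp [this, hlab x hxC, hxv]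
    | join i j hij =>
      refine ⟨_, hreach.tail (.join D (i.castAdd m) (j.castAdd m) (hinj.ne hij)), hv, ?_, hlab⟩
      intro x y
      simp only [hadj, hv]
      by_cases hx : φ x ∈ C.verts
      · by_cases hy : φ y ∈ C.verts
        · simp only [hlab x hx, hlab y hy, hinj.eq_iff]
          tauto
        · tauto
      · tauto
    | relabel i j hij =>
      refine ⟨_, hreach.tail (.relabel D (i.castAdd m) (j.castAdd m) (hinj.ne hij)), hv, hadj, ?_⟩
      intro x hx
      simp only [hlab x hx, hinj.eq_iff]
      split_ifs <;> rfl

/-- If `G = H[G_v : v ∈ V(H)]` is an inflation, then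
`lcw(G) ≤ lcw(H) + max_{v ∈ V(H)} lcw(G_v)`, where `G_v` is the induced subgraph of `G`
on the fiber of `v`. -/
theorem lcw_inflation {V ι : Type} [Finite V] [Fintype ι]
    (G : SimpleGraph V) (H : SimpleGraph ι) (φ : V → ι) (h : IsInflation G H φ) :
    lcw G ≤ lcw H + Finset.univ.sup fun v : ι => lcw (G.induce {x | φ x = v}) := by
  obtain ⟨ℓ₀, ℓ, hH⟩ := lcwLE_lcw H
  obtain ⟨D, hreach, hv, hadj, -⟩ := exists_inflated G φ
    (m := Finset.univ.sup fun v : ι => lcw (G.induce {x | φ x = v}))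
    (fun v => ⟨_, Finset.le_sup (f := fun v : ι => lcw (G.induce {x | φ x = v}))
      (Finset.mem_univ v), lcwLE_lcw _⟩) ℓ₀ _ hH
  refine Nat.sInf_le ⟨fun x => (ℓ₀ (φ x)).castAdd _, D.lab, ?_⟩
  convert hreach using 1
  obtain ⟨verts, adj, lab⟩ := D
  simp only [Set.mem_univ, true_and, iff_true] at hv hadj
  congr 1
  · ext x
    simp [hv]
  · funext x y
    rw [eq_iff_iff, hadj]
    by_cases hxy : φ x = φ y
    · simp [hxy]
    · simp [hxy, h.2 x y hxy]
end
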